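/- arXiv:1011.3434 — 3 statements merged into one kernel-verified Lean document; each statement's English description precedes it below -/
import Mathlib

section
/- There is an absolute constant C such that for all α ∈ ℝ and all β > 0, |F(α, β)| ≤ C β^{−1/3}. -/
open MeasureTheory

/-- The Gaussian weight `Γ(x) = exp(−πx²)`. -/
noncomputable def gauss (x : ℝ) : ℝ := Real.exp (-Real.pi * x ^ 2)

/-- `F(α,β) = ∫_{−∞}^{∞} Γ(x) e(−βx³ − αx) dx`, where `e(x) = exp(2πix)`. -/
noncomputable def Fab (α β : ℝ) : ℂ :=
  ∫ x : ℝ, (gauss x : ℂ) * Complex.exp (2 * Real.pi * Complex.I * ((-β * x ^ 3 - α * x : ℝ) : ℂ))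

/-! With `p = φ'` the phase derivative, integrate by parts against `-i (p / (δ² + p²)) A e^{iφ}`,
whose derivative has integral zero and differs from `A e^{iφ}` by at most
`|A| (δ² + |p'|) / (δ² + p²) + |A'| / (2δ)`. Here `|p'| / (δ² + p²)` is up to sign the derivative
of `arctan (p / δ) / δ`, so its integral is at most `2π / δ` when `p'` vanishes at most at one
point `x₀`. If moreover `c |x - x₀| ≤ |p'|`, then `δ² / (δ² + p²)` is at most `1` for
`|x - x₀| ≤ r`, and at most `(δ² / (c r)) |p'| / (δ² + p²)` elsewhere. With `r = c^{-1/3}` and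
`δ = 1 / r` every contribution is a multiple of `r`. -/

open Set Filter Topology
open scoped Real

section BoundedFunctions

theorem exists_tendsto_atTop_of_monotoneOn_Ici {ι α : Type*} [LinearOrder ι]
    [ConditionallyCompleteLinearOrder α] [TopologicalSpace α] [OrderTopology α]
    {f : ι → α} {a : ι} (hf : MonotoneOn f (Ici a)) (hbdd : BddAbove (f '' Ici a)) :
    ∃ l, Tendsto f atTop (𝓝 l) := by
  have hmono : Monotone fun x => f (max a x) := fun x y hxy =>
    hf (le_max_left a x) (le_max_left a y) (max_le_max_left a hxy)
  have hbdd' : BddAbove (range fun x => f (max a x)) :=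
    hbdd.mono (range_subset_iff.2 fun x => mem_image_of_mem f (le_max_left a x))
  refine ⟨_, (tendsto_atTop_ciSup hmono hbdd').congr' ?_⟩
  filter_upwards [eventually_ge_atTop a] with x hx
  rw [max_eq_right hx]

variable {f f' : ℝ → ℝ} {a B : ℝ}

theorem integrableOn_Ioi_and_integral_abs_deriv_le_of_pos (hf : ∀ x ∈ Ici a, HasDerivAt f (f' x) x)
    (hpos : ∀ x ∈ Ioi a, 0 < f' x) (hB : ∀ x ∈ Ici a, |f x| ≤ B) :
    IntegrableOn f' (Ioi a) ∧ ∫ x in Ioi a, |f' x| ≤ 2 * B := by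
  have hmono : MonotoneOn f (Ici a) := by
    refine monotoneOn_of_hasDerivWithinAt_nonneg (f' := f') (convex_Ici a)
      (fun x hx => (hf x hx).continuousAt.continuousWithinAt) ?_ ?_ <;>
      rw [interior_Ici]
    exacts [fun x hx => (hf x (Ioi_subset_Ici_self hx)).hasDerivWithinAt,
      fun x hx => (hpos x hx).le]
  obtain ⟨l, hl⟩ := exists_tendsto_atTop_of_monotoneOn_Ici hmono
    ⟨B, forall_mem_image.2 fun x hx => (abs_le.1 (hB x hx)).2⟩
  have hnonneg : ∀ x ∈ Ioi a, 0 ≤ f' x := fun x hx => (hpos x hx).le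
  refine ⟨integrableOn_Ioi_deriv_of_nonneg' hf hnonneg hl, ?_⟩
  have hlB : l ≤ B := le_of_tendsto hl <| by
    filter_upwards [eventually_ge_atTop a] with x hx using (abs_le.1 (hB x hx)).2
  have haB : -B ≤ f a := (abs_le.1 (hB a self_mem_Ici)).1
  calc ∫ x in Ioi a, |f' x| = ∫ x in Ioi a, f' x :=
        setIntegral_congr_fun measurableSet_Ioi fun x hx => abs_of_pos (hpos x hx)
    _ = l - f a := integral_Ioi_of_hasDerivAt_of_nonneg' hf hnonneg hl
    _ ≤ 2 * B := by linarith

theorem integrableOn_Ioi_and_integral_abs_deriv_le_of_ne_zero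
    (hf : ∀ x ∈ Ici a, HasDerivAt f (f' x) x)
    (hne : ∀ x ∈ Ioi a, f' x ≠ 0) (hB : ∀ x ∈ Ici a, |f x| ≤ B) :
    IntegrableOn f' (Ioi a) ∧ ∫ x in Ioi a, |f' x| ≤ 2 * B := by
  rcases hasDerivWithinAt_forall_lt_or_forall_gt_of_forall_ne (convex_Ioi a)
    (fun x hx => (hf x (Ioi_subset_Ici_self hx)).hasDerivWithinAt) hne with hneg | hpos
  · have h := integrableOn_Ioi_and_integral_abs_deriv_le_of_pos (f := -f) (f' := -f')
      (fun x hx => (hf x hx).neg) (fun x hx => neg_pos.2 (hneg x hx))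
      (fun x hx => (abs_neg (f x)).trans_le (hB x hx))
    simpa only [IntegrableOn, integrable_neg_iff, Pi.neg_apply, abs_neg] using h
  · exact integrableOn_Ioi_and_integral_abs_deriv_le_of_pos hf hpos hB

theorem integrable_and_integral_abs_deriv_le_of_ne_zero (hf : ∀ x, HasDerivAt f (f' x) x)
    (hne : ∀ x, x ≠ a → f' x ≠ 0) (hB : ∀ x, |f x| ≤ B) :
    Integrable f' ∧ ∫ x, |f' x| ≤ 4 * B := by
  have hright := integrableOn_Ioi_and_integral_abs_deriv_le_of_ne_zero (fun x _ => hf x)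
    (fun x (hx : a < x) => hne x hx.ne') (fun x _ => hB x)
  have hreflect : ∀ x, HasDerivAt (fun x => f (-x)) (-f' (-x)) x := fun x => by
    simpa only [Function.comp_def, mul_neg, mul_one] using (hf (-x)).comp x (hasDerivAt_neg x)
  have hleft := integrableOn_Ioi_and_integral_abs_deriv_le_of_ne_zero (a := -a)
    (fun x _ => hreflect x)
    (fun x (hx : -a < x) => neg_ne_zero.2 (hne (-x) (neg_lt.1 hx).ne)) (fun x _ => hB (-x))
  have hleft_int : IntegrableOn f' (Iic a) := by
    rw [integrableOn_Iic_iff_integrableOn_Iio,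
      ← (Measure.measurePreserving_neg (volume : Measure ℝ)).integrableOn_comp_preimage
        (MeasurableEquiv.neg ℝ).measurableEmbedding, neg_preimage, neg_Iio]
    exact integrable_neg_iff.1 hleft.1
  have hint : Integrable f' := by
    rw [← integrableOn_univ, ← Iic_union_Ioi (a := a)]
    exact hleft_int.union hright.1
  refine ⟨hint, ?_⟩
  have hleft_le := hleft.2
  simp only [abs_neg] at hleft_le
  rw [integral_comp_neg_Ioi (-a) fun x => |f' x|, neg_neg] at hleft_le
  rw [← intervalIntegral.integral_Iic_add_Ioi hint.abs.integrableOn hint.abs.integrableOn]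
  linarith [hright.2]

end BoundedFunctions

theorem two_mul_norm_le_integral_norm_deriv {E : Type*} [NormedAddCommGroup E] [NormedSpace ℝ E]
    [CompleteSpace E] {A A' : ℝ → E} (hA : ∀ x, HasDerivAt A (A' x) x) (hint : Integrable A)
    (hint' : Integrable A') (x : ℝ) : 2 * ‖A x‖ ≤ ∫ y, ‖A' y‖ := by
  have hleft : ∫ y in Iic x, A' y = A x := by
    rw [integral_Iic_of_hasDerivAt_of_tendsto' (fun y _ => hA y) hint'.integrableOn
      (tendsto_zero_of_hasDerivAt_of_integrableOn_Iic (a := x) (fun y _ => hA y)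
        hint'.integrableOn hint.integrableOn), sub_zero]
  have hright : ∫ y in Ioi x, A' y = -A x := by
    rw [integral_Ioi_of_hasDerivAt_of_tendsto' (fun y _ => hA y) hint'.integrableOn
      (tendsto_zero_of_hasDerivAt_of_integrableOn_Ioi (a := x) (fun y _ => hA y)
        hint'.integrableOn hint.integrableOn), zero_sub]
  calc 2 * ‖A x‖ = ‖∫ y in Iic x, A' y‖ + ‖∫ y in Ioi x, A' y‖ := by
        rw [hleft, hright, norm_neg, two_mul]
    _ ≤ (∫ y in Iic x, ‖A' y‖) + ∫ y in Ioi x, ‖A' y‖ :=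
        add_le_add (norm_integral_le_integral_norm _) (norm_integral_le_integral_norm _)
    _ = ∫ y, ‖A' y‖ := intervalIntegral.integral_Iic_add_Ioi hint'.norm.integrableOn
        hint'.norm.integrableOn

/-- The smooth substitute `t / (δ² + t²)` for `t⁻¹`, bounded by `1 / (2δ)`, by which the phase
derivative is divided when integrating by parts near its zeros. -/
noncomputable def regularizedInv (δ t : ℝ) : ℝ := t / (δ ^ 2 + t ^ 2)

section RegularizedInv

variable {δ : ℝ}

theorem abs_regularizedInv_le (hδ : 0 < δ) (t : ℝ) : |regularizedInv δ t| ≤ 1 / (2 * δ) := by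
  rw [regularizedInv, abs_div, abs_of_pos (by positivity : 0 < δ ^ 2 + t ^ 2),
    div_le_div_iff₀ (by positivity) (by positivity), ← sq_abs t]
  nlinarith [sq_nonneg (δ - |t|)]

theorem one_sub_mul_regularizedInv (hδ : 0 < δ) (t : ℝ) :
    1 - t * regularizedInv δ t = δ ^ 2 * (1 / (δ ^ 2 + t ^ 2)) := by
  rw [regularizedInv]
  field_simp
  ring

theorem hasDerivAt_regularizedInv (hδ : 0 < δ) (t : ℝ) :
    HasDerivAt (regularizedInv δ) ((δ ^ 2 - t ^ 2) / (δ ^ 2 + t ^ 2) ^ 2) t := by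
  refine ((hasDerivAt_id t).div ((hasDerivAt_pow 2 t).const_add (δ ^ 2))
    (by positivity)).congr_deriv ?_
  simp only [id_eq]
  congr 1
  push_cast
  ring

theorem abs_deriv_regularizedInv_le (hδ : 0 < δ) (t : ℝ) :
    |deriv (regularizedInv δ) t| ≤ 1 / (δ ^ 2 + t ^ 2) := by
  have hpos : 0 < δ ^ 2 + t ^ 2 := by positivity
  rw [(hasDerivAt_regularizedInv hδ t).deriv, abs_div, abs_of_pos (pow_pos hpos 2),
    div_le_div_iff₀ (pow_pos hpos 2) hpos, one_mul, sq (δ ^ 2 + t ^ 2)]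
  gcongr
  exact abs_le.2 ⟨by linarith [sq_nonneg δ], by linarith [sq_nonneg t]⟩

end RegularizedInv

theorem norm_integral_mul_cexp_le_of_hasDerivAt {A B B' : ℝ → ℂ} {φ φ' : ℝ → ℝ}
    (hφ : ∀ x, HasDerivAt φ (φ' x) x) (hB : ∀ x, HasDerivAt B (B' x) x) (hA_int : Integrable A)
    (hB_int : Integrable B) (hB'_int : Integrable B')
    (hdiff_int : Integrable fun x => A x - φ' x * B x) :
    ‖∫ x, A x * Complex.exp (φ x * Complex.I)‖ ≤
      (∫ x, ‖A x - φ' x * B x‖) + ∫ x, ‖B' x‖ := by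
  set e : ℝ → ℂ := fun x => Complex.exp (φ x * Complex.I)
  have he_norm : ∀ x, ‖e x‖ = 1 := fun x => Complex.norm_exp_ofReal_mul_I (φ x)
  have he_deriv : ∀ x, HasDerivAt e (e x * (φ' x * Complex.I)) x := fun x =>
    ((hφ x).ofReal_comp.mul_const Complex.I).cexp
  have he_cont : Continuous e := continuous_iff_continuousAt.2 fun x => (he_deriv x).continuousAt
  have hmul_int : ∀ {g : ℝ → ℂ}, Integrable g → Integrable fun x => g x * e x := fun hg =>
    hg.mul_bdd he_cont.aestronglyMeasurable (.of_forall fun x => (he_norm x).le)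
  set R : ℝ → ℂ := fun x => A x - φ' x * B x + Complex.I * B' x
  have hR_int : Integrable R := hdiff_int.add (hB'_int.const_mul Complex.I)
  have hderiv : ∀ x, HasDerivAt (fun x => -Complex.I * (B x * e x)) (A x * e x - R x * e x) x :=
    fun x => (((hB x).mul (he_deriv x)).const_mul (-Complex.I)).congr_deriv <| by
      linear_combination (-(φ' x : ℂ) * B x * e x) * Complex.I_sq
  have hzero := integral_eq_zero_of_hasDerivAt_of_integrable hderiv
    ((hmul_int hA_int).sub (hmul_int hR_int)) ((hmul_int hB_int).const_mul _)
  rw [integral_sub (hmul_int hA_int) (hmul_int hR_int), sub_eq_zero] at hzero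
  rw [hzero, ← integral_add hdiff_int.norm hB'_int.norm]
  refine norm_integral_le_of_norm_le (hdiff_int.norm.add hB'_int.norm)
    (.of_forall fun x => ?_)
  calc ‖R x * e x‖ = ‖R x‖ := by rw [norm_mul, he_norm, mul_one]
    _ ≤ ‖A x - φ' x * B x‖ + ‖Complex.I * B' x‖ := norm_add_le _ _
    _ = ‖A x - φ' x * B x‖ + ‖B' x‖ := by rw [norm_mul, Complex.norm_I, one_mul]

section LinearGrowth

variable {p q : ℝ → ℝ} {c δ r x₀ : ℝ}

theorem integrable_and_integral_abs_deriv_div_sq_add_sq_le (hp : ∀ x, HasDerivAt p (q x) x)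
    (hne : ∀ x, x ≠ x₀ → q x ≠ 0) (hδ : 0 < δ) :
    Integrable (fun x => |q x| / (δ ^ 2 + p x ^ 2)) ∧
      ∫ x, |q x| / (δ ^ 2 + p x ^ 2) ≤ 2 * π / δ := by
  have hpos : ∀ x, 0 < δ ^ 2 + p x ^ 2 := fun x => by positivity
  have hderiv : ∀ x, HasDerivAt (fun x => Real.arctan (p x / δ) / δ) (q x / (δ ^ 2 + p x ^ 2)) x :=
    fun x => (((hp x).div_const δ).arctan.div_const δ).congr_deriv <| by field_simp
  have hbound : ∀ x, |Real.arctan (p x / δ) / δ| ≤ π / 2 / δ := fun x => by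
    rw [abs_div, abs_of_pos hδ]
    gcongr
    exact abs_le.2 ⟨(Real.neg_pi_div_two_lt_arctan _).le, (Real.arctan_lt_pi_div_two _).le⟩
  obtain ⟨hint, hle⟩ := integrable_and_integral_abs_deriv_le_of_ne_zero hderiv
    (fun x hx => div_ne_zero (hne x hx) (hpos x).ne') hbound
  have habs : ∀ x, |q x / (δ ^ 2 + p x ^ 2)| = |q x| / (δ ^ 2 + p x ^ 2) := fun x => by
    rw [abs_div, abs_of_pos (hpos x)]
  have hint_abs := hint.abs
  simp only [habs] at hint_abs hle
  exact ⟨hint_abs, hle.trans_eq (by ring)⟩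

theorem one_div_sq_add_sq_le (hc : 0 < c) (hq : ∀ x, c * |x - x₀| ≤ |q x|) (hδ : 0 < δ)
    (hr : 0 < r) (x : ℝ) :
    1 / (δ ^ 2 + p x ^ 2) ≤ (Metric.closedBall x₀ r).indicator (fun _ => 1 / δ ^ 2) x +
      1 / (c * r) * (|q x| / (δ ^ 2 + p x ^ 2)) := by
  by_cases hx : x ∈ Metric.closedBall x₀ r
  · rw [indicator_of_mem hx]
    refine le_add_of_le_of_nonneg ?_ (by positivity)
    gcongr
    exact le_add_of_nonneg_right (sq_nonneg _)
  · rw [Metric.mem_closedBall, Real.dist_eq, not_le] at hx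
    have hfar : c * r ≤ |q x| := le_trans (by gcongr) (hq x)
    rw [indicator_of_notMem (by simpa [Real.dist_eq] using hx), zero_add, div_mul_div_comm, one_mul,
      div_le_div_iff₀ (by positivity) (by positivity), one_mul]
    gcongr

theorem integrable_and_integral_one_div_sq_add_sq_le (hp : Continuous p) (hc : 0 < c)
    (hq : ∀ x, c * |x - x₀| ≤ |q x|) (hδ : 0 < δ) (hr : 0 < r)
    (hint : Integrable fun x => |q x| / (δ ^ 2 + p x ^ 2)) :
    Integrable (fun x => 1 / (δ ^ 2 + p x ^ 2)) ∧
      ∫ x, 1 / (δ ^ 2 + p x ^ 2) ≤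
        2 * r / δ ^ 2 + 1 / (c * r) * ∫ x, |q x| / (δ ^ 2 + p x ^ 2) := by
  have hfar := hint.const_mul (1 / (c * r))
  have hnear : Integrable ((Metric.closedBall x₀ r).indicator fun _ => 1 / δ ^ 2) :=
    (integrable_indicator_iff measurableSet_closedBall).2
      (integrableOn_const measure_closedBall_lt_top.ne)
  have hle := one_div_sq_add_sq_le (p := p) hc hq hδ hr
  have hpos : ∀ x, 0 < δ ^ 2 + p x ^ 2 := fun x => by positivity
  have hcont : Continuous fun x => 1 / (δ ^ 2 + p x ^ 2) := by
    fun_prop (disch := exact fun x => (hpos x).ne')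
  have hint' : Integrable fun x => 1 / (δ ^ 2 + p x ^ 2) :=
    (hnear.add hfar).mono' hcont.aestronglyMeasurable <| .of_forall fun x => by
      rw [Real.norm_of_nonneg (one_div_nonneg.2 (hpos x).le)]
      exact hle x
  refine ⟨hint', (integral_mono hint' (hnear.add hfar) hle).trans_eq ?_⟩
  rw [integral_add' hnear hfar, integral_const_mul, integral_indicator_const _
    measurableSet_closedBall, Real.volume_real_closedBall hr.le, smul_eq_mul, mul_one_div]

end LinearGrowth

section VanDerCorput

theorem integral_norm_mul_le_of_norm_le {X R : Type*} [MeasurableSpace X] {μ : Measure X}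
    [NormedRing R] {f g : X → R} {K : ℝ} (hf : Integrable f μ) (hg : ∀ x, ‖g x‖ ≤ K) :
    ∫ x, ‖f x * g x‖ ∂μ ≤ (∫ x, ‖f x‖ ∂μ) * K := by
  rw [← integral_mul_const]
  exact integral_mono_of_nonneg (.of_forall fun x => norm_nonneg _) (hf.norm.mul_const K)
    (.of_forall fun x => (norm_mul_le _ _).trans
      (mul_le_mul_of_nonneg_left (hg x) (norm_nonneg _)))

variable {A A' : ℝ → ℂ} {φ φ' φ'' : ℝ → ℝ}

theorem norm_integral_mul_cexp_le_of_multiplier {u u' : ℝ → ℝ} {K : ℝ}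
    (hA : ∀ x, HasDerivAt A (A' x) x) (hA_int : Integrable A) (hA'_int : Integrable A')
    (hφ : ∀ x, HasDerivAt φ (φ' x) x) (hu : ∀ x, HasDerivAt u (u' x) x) (hu_le : ∀ x, |u x| ≤ K)
    (hu'_int : Integrable u') (hdiff_int : Integrable fun x => 1 - φ' x * u x) :
    ‖∫ x, A x * Complex.exp (φ x * Complex.I)‖ ≤
      (((∫ x, |1 - φ' x * u x|) + ∫ x, |u' x|) / 2 + K) * ∫ x, ‖A' x‖ := by
  set V := ∫ x, ‖A' x‖
  have hA_le : ∀ x, ‖A x‖ ≤ V / 2 := fun x => by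
    linarith [two_mul_norm_le_integral_norm_deriv hA hA_int hA'_int x]
  have hu_norm : ∀ x, ‖(u x : ℂ)‖ ≤ K := fun x => (Complex.norm_real (u x)).trans_le (hu_le x)
  have hu_meas : AEStronglyMeasurable fun x => (u x : ℂ) := Continuous.aestronglyMeasurable <|
    continuous_iff_continuousAt.2 fun x => (hu x).ofReal_comp.continuousAt
  have hmul_int : ∀ {g : ℝ → ℝ}, Integrable g → Integrable fun x => (g x : ℂ) * A x := fun hg =>
    hg.ofReal.mul_bdd hA_int.aestronglyMeasurable (.of_forall hA_le)
  have hmul_le : ∀ {g : ℝ → ℝ}, Integrable g →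
      ∫ x, ‖(g x : ℂ) * A x‖ ≤ (∫ x, |g x|) * (V / 2) := fun {g} hg => by
    simpa only [Complex.norm_real, Real.norm_eq_abs] using
      integral_norm_mul_le_of_norm_le (f := fun x => (g x : ℂ)) hg.ofReal hA_le
  have hA'u_int : Integrable fun x => A' x * u x := hA'_int.mul_bdd hu_meas (.of_forall hu_norm)
  have hdiff : ∀ x, A x - φ' x * (u x * A x) = (1 - φ' x * u x : ℝ) * A x := fun x => by
    push_cast
    ring
  calc ‖∫ x, A x * Complex.exp (φ x * Complex.I)‖
      ≤ (∫ x, ‖A x - φ' x * (u x * A x)‖) + ∫ x, ‖u' x * A x + A' x * u x‖ :=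
        norm_integral_mul_cexp_le_of_hasDerivAt hφ
          (fun x => ((hu x).ofReal_comp.mul (hA x)).congr_deriv (by rw [mul_comm (A' x)])) hA_int
          (hA_int.bdd_mul hu_meas (.of_forall hu_norm)) ((hmul_int hu'_int).add hA'u_int)
          (by simpa only [hdiff] using hmul_int hdiff_int)
    _ ≤ (∫ x, ‖((1 - φ' x * u x : ℝ) : ℂ) * A x‖) +
          ((∫ x, ‖u' x * A x‖) + ∫ x, ‖A' x * u x‖) := by
        simp only [hdiff]
        rw [← integral_add (hmul_int hu'_int).norm hA'u_int.norm]
        exact add_le_add le_rfl <| integral_mono ((hmul_int hu'_int).add hA'u_int).norm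
          ((hmul_int hu'_int).norm.add hA'u_int.norm) fun x => norm_add_le _ _
    _ ≤ (∫ x, |1 - φ' x * u x|) * (V / 2) + ((∫ x, |u' x|) * (V / 2) + V * K) := by
        gcongr
        exacts [hmul_le hdiff_int, hmul_le hu'_int,
          integral_norm_mul_le_of_norm_le hA'_int hu_norm]
    _ = (((∫ x, |1 - φ' x * u x|) + ∫ x, |u' x|) / 2 + K) * V := by ring

theorem norm_integral_mul_cexp_le_of_integrable_div_sq_add_sq {δ : ℝ}
    (hA : ∀ x, HasDerivAt A (A' x) x)
    (hA_int : Integrable A) (hA'_int : Integrable A') (hφ : ∀ x, HasDerivAt φ (φ' x) x)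
    (hφ' : ∀ x, HasDerivAt φ' (φ'' x) x) (hδ : 0 < δ)
    (hnear : Integrable fun x => 1 / (δ ^ 2 + φ' x ^ 2))
    (hcurv : Integrable fun x => |φ'' x| / (δ ^ 2 + φ' x ^ 2)) :
    ‖∫ x, A x * Complex.exp (φ x * Complex.I)‖ ≤
      ((δ ^ 2 * (∫ x, 1 / (δ ^ 2 + φ' x ^ 2)) + ∫ x, |φ'' x| / (δ ^ 2 + φ' x ^ 2)) / 2 +
        1 / (2 * δ)) * ∫ x, ‖A' x‖ := by
  set u' : ℝ → ℝ := fun x => deriv (regularizedInv δ) (φ' x) * φ'' x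
  have hu : ∀ x, HasDerivAt (fun x => regularizedInv δ (φ' x)) (u' x) x := fun x =>
    (hasDerivAt_regularizedInv hδ (φ' x)).differentiableAt.hasDerivAt.comp x (hφ' x)
  have hu'_le : ∀ x, ‖u' x‖ ≤ |φ'' x| / (δ ^ 2 + φ' x ^ 2) := fun x => by
    rw [norm_mul, ← one_div_mul_eq_div]
    gcongr
    exacts [abs_deriv_regularizedInv_le hδ (φ' x), le_rfl]
  have hu'_meas : Measurable u' := by
    rw [funext fun x => (hu x).deriv.symm]
    exact measurable_deriv _
  have hu'_int : Integrable u' :=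
    hcurv.mono' hu'_meas.aestronglyMeasurable (.of_forall hu'_le)
  have hdiff : ∀ x, 1 - φ' x * regularizedInv δ (φ' x) = δ ^ 2 * (1 / (δ ^ 2 + φ' x ^ 2)) :=
    fun x => one_sub_mul_regularizedInv hδ (φ' x)
  have hdiff_nonneg : ∀ x, 0 ≤ δ ^ 2 * (1 / (δ ^ 2 + φ' x ^ 2)) := fun x => by positivity
  refine (norm_integral_mul_cexp_le_of_multiplier hA hA_int hA'_int hφ hu
    (fun x => abs_regularizedInv_le hδ (φ' x)) hu'_int ?_).trans ?_
  · simpa only [hdiff] using hnear.const_mul (δ ^ 2)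
  · simp only [hdiff, abs_of_nonneg (hdiff_nonneg _), integral_const_mul]
    gcongr ((_ + ?_) / 2 + _) * _
    exact integral_mono hu'_int.abs hcurv hu'_le

/-- Van der Corput's estimate of order three on the real line. -/
theorem norm_integral_mul_cexp_le_of_mul_abs_sub_le {c x₀ : ℝ} (hA : ∀ x, HasDerivAt A (A' x) x)
    (hA_int : Integrable A) (hA'_int : Integrable A') (hφ : ∀ x, HasDerivAt φ (φ' x) x)
    (hφ' : ∀ x, HasDerivAt φ' (φ'' x) x) (hc : 0 < c) (hφ'' : ∀ x, c * |x - x₀| ≤ |φ'' x|) :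
    ‖∫ x, A x * Complex.exp (φ x * Complex.I)‖ ≤
      (2 * π + 3 / 2) * c ^ (-(1 : ℝ) / 3) * ∫ x, ‖A' x‖ := by
  set r := c ^ (-(1 : ℝ) / 3)
  have hr : 0 < r := Real.rpow_pos_of_pos hc _
  have hcr : c * r ^ 3 = 1 := by
    rw [← Real.rpow_natCast, ← Real.rpow_mul hc.le]
    norm_num [Real.rpow_neg_one, hc.ne']
  have hδ : 0 < r⁻¹ := inv_pos.2 hr
  have hne : ∀ x, x ≠ x₀ → φ'' x ≠ 0 := fun x hx =>
    abs_pos.1 <| (mul_pos hc (abs_pos.2 (sub_ne_zero.2 hx))).trans_le (hφ'' x)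
  obtain ⟨hcurv, hcurv_le⟩ := integrable_and_integral_abs_deriv_div_sq_add_sq_le hφ' hne hδ
  obtain ⟨hnear, hnear_le⟩ := integrable_and_integral_one_div_sq_add_sq_le
    (continuous_iff_continuousAt.2 fun x => (hφ' x).continuousAt) hc hφ'' hδ hr hcurv
  refine (norm_integral_mul_cexp_le_of_integrable_div_sq_add_sq hA hA_int hA'_int hφ hφ' hδ hnear
    hcurv).trans ?_
  set I₁ := ∫ x, 1 / (r⁻¹ ^ 2 + φ' x ^ 2)
  set I₂ := ∫ x, |φ'' x| / (r⁻¹ ^ 2 + φ' x ^ 2)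
  have hI₂ : I₂ ≤ 2 * π * r := by simpa only [div_inv_eq_mul] using hcurv_le
  have hI₁ : r⁻¹ ^ 2 * I₁ ≤ 2 * r + I₂ :=
    calc r⁻¹ ^ 2 * I₁ ≤ r⁻¹ ^ 2 * (2 * r / r⁻¹ ^ 2 + 1 / (c * r) * I₂) := by gcongr
      _ = 2 * r + 1 / (c * r ^ 3) * I₂ := by field_simp
      _ = 2 * r + I₂ := by rw [hcr, div_one, one_mul]
  have hK : 1 / (2 * r⁻¹) = r / 2 := by field_simp
  gcongr
  linarith

theorem norm_integral_mul_cexp_cubic_le (hA : ∀ x, HasDerivAt A (A' x) x)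
    (hA_int : Integrable A) (hA'_int : Integrable A') {a : ℝ} (ha : a ≠ 0) (b : ℝ) :
    ‖∫ x, A x * Complex.exp ((a * x ^ 3 + b * x : ℝ) * Complex.I)‖ ≤
      (2 * π + 3 / 2) * (6 * |a|) ^ (-(1 : ℝ) / 3) * ∫ x, ‖A' x‖ := by
  have hφ : ∀ x, HasDerivAt (fun x => a * x ^ 3 + b * x) (3 * a * x ^ 2 + b) x := fun x =>
    (((hasDerivAt_pow 3 x).const_mul a).add ((hasDerivAt_id x).const_mul b)).congr_deriv <| by
      push_cast
      ring
  have hφ' : ∀ x, HasDerivAt (fun x => 3 * a * x ^ 2 + b) (6 * a * x) x := fun x =>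
    (((hasDerivAt_pow 2 x).const_mul (3 * a)).add_const b).congr_deriv <| by
      push_cast
      ring
  refine norm_integral_mul_cexp_le_of_mul_abs_sub_le (x₀ := 0) hA hA_int hA'_int hφ hφ'
    (by positivity) fun x => ?_
  rw [sub_zero, abs_mul, abs_mul, abs_of_pos (by norm_num : (0 : ℝ) < 6)]

end VanDerCorput

theorem hasDerivAt_gauss (x : ℝ) : HasDerivAt gauss (-2 * π * (x * gauss x)) x :=
  ((hasDerivAt_pow 2 x).const_mul (-π)).exp.congr_deriv <| by
    simp only [gauss]
    ring

theorem Fab_eq_integral_mul_cexp_cubic (α β : ℝ) :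
    Fab α β = ∫ x, (gauss x : ℂ) *
      Complex.exp ((-2 * π * β * x ^ 3 + -2 * π * α * x : ℝ) * Complex.I) := by
  unfold Fab
  congr! 4 with x
  push_cast
  ring

theorem stmt6_general : ∃ C : ℝ, ∀ α β : ℝ, β ≠ 0 → ‖Fab α β‖ ≤ C * |β| ^ (-(1 : ℝ) / 3) := by
  set V := ∫ x, ‖((-2 * π * (x * gauss x) : ℝ) : ℂ)‖
  refine ⟨(2 * π + 3 / 2) * (12 * π) ^ (-(1 : ℝ) / 3) * V, fun α β hβ => ?_⟩
  have hgauss : Integrable gauss := integrable_exp_neg_mul_sq Real.pi_pos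
  have hgauss' : Integrable fun x => -2 * π * (x * gauss x) :=
    (integrable_mul_exp_neg_mul_sq Real.pi_pos).const_mul _
  have habs : 6 * |-2 * π * β| = 12 * π * |β| := by
    rw [abs_mul, abs_mul, abs_neg, abs_two, abs_of_pos Real.pi_pos]
    ring
  calc ‖Fab α β‖ ≤ (2 * π + 3 / 2) * (6 * |-2 * π * β|) ^ (-(1 : ℝ) / 3) * V := by
        rw [Fab_eq_integral_mul_cexp_cubic]
        exact norm_integral_mul_cexp_cubic_le (fun x => (hasDerivAt_gauss x).ofReal_comp)
          hgauss.ofReal hgauss'.ofReal (by simpa [Real.pi_ne_zero] using hβ) _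
    _ = (2 * π + 3 / 2) * (12 * π) ^ (-(1 : ℝ) / 3) * V * |β| ^ (-(1 : ℝ) / 3) := by
        rw [habs, Real.mul_rpow (by positivity) (abs_nonneg β)]
        ring

theorem stmt6 :
    ∃ C : ℝ, ∀ α β : ℝ, 0 < β → ‖Fab α β‖ ≤ C * β ^ (-(1 : ℝ)/3) := by
  obtain ⟨C, hC⟩ := stmt6_general
  exact ⟨C, fun α β hβ => by simpa only [abs_of_pos hβ] using hC α β hβ.ne'⟩
end

section
/- There is an absolute constant C such that for all α < 0 and all β > 0, | F(α, β) − (2^{1/2} exp(−π|α|/(3β)) / (3|α|β)^{1/4}) · cos( 2π( 1/8 − 2|α|^{3/2} / (3^{3/2} β^{1/2}) ) ) | ≤ C/|α|. -/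
open MeasureTheory

/-!
Write `α = -3βs²` and `x = st`. The phase becomes `μ (t - t³ / 3)` with `μ = 6πβs³`, whose critical
points `±1` contribute complex conjugates, and the weight becomes `g (t²)` with `g u = exp (-πs²u)`.
In the coordinate `w = (t - 1) √((t + 2) / 3)` the phase is `μ (2 / 3 - w²)`, so against the weight
`g 1 * dw/dt` it is a Fresnel integral, which gives the main term. The rest of the weight vanishes
at `t = 1`, and by convexity of `g` its quotient by the derivative `1 - t²` of the phase is
antitone; hence Bonnet's second mean value theorem bounds that part by `O(1 / μ)`, with a constant
independent of how concentrated the weight is.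
-/

open Set Filter
open Complex (I)
open scoped Topology Real

section Bonnet

variable {E : Type*} [NormedAddCommGroup E] [NormedSpace ℝ E] [CompleteSpace E]
  {q : ℝ → ℝ} {f : ℝ → E} {a b B : ℝ}

lemma exists_Ioc_inter_superlevel_ae_eq_Ioc (hq : Antitone q) (hab : a ≤ b) (y : ℝ) :
    ∃ c ∈ Icc a b, (Ioc a b ∩ {t | y < q t} : Set ℝ) =ᵐ[volume] Ioc a c := by
  set S : Set ℝ := insert a (Ioc a b ∩ {t | y < q t})
  have hSb : ∀ t ∈ S, t ≤ b := by
    rintro t (rfl | ht)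
    exacts [hab, ht.1.2]
  have hS : BddAbove S := ⟨b, hSb⟩
  refine ⟨sSup S, ⟨le_csSup hS (mem_insert a _), csSup_le ⟨a, mem_insert a _⟩ hSb⟩, ?_⟩
  have subset_Ioc : Ioc a b ∩ {t | y < q t} ⊆ Ioc a (sSup S) := fun t ht =>
    ⟨ht.1.1, le_csSup hS (mem_insert_of_mem a ht)⟩
  have Ioo_subset : Ioo a (sSup S) ⊆ Ioc a b ∩ {t | y < q t} := by
    rintro t ⟨hat, htS⟩
    obtain ⟨u, rfl | hu, htu⟩ := exists_lt_of_lt_csSup ⟨a, mem_insert a _⟩ htS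
    · exact absurd hat htu.not_gt
    · exact ⟨⟨hat, htu.le.trans hu.1.2⟩, hu.2.trans_le (hq htu.le)⟩
  exact subset_Ioc.eventuallyLE.antisymm (Ioo_ae_eq_Ioc.symm.le.trans Ioo_subset.eventuallyLE)

lemma setIntegral_Ioc_indicator_Iio_const {u m : ℝ} (hu : 0 ≤ u) (hum : u ≤ m) (v : E) :
    ∫ y in Ioc 0 m, (Iio u).indicator (fun _ => v) y = u • v := by
  have hinter : Ioc 0 m ∩ Iio u = Ioo 0 u := by
    ext y
    exact ⟨fun h => ⟨h.1.1, h.2⟩, fun h => ⟨⟨h.1, h.2.le.trans hum⟩, h.2⟩⟩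
  rw [setIntegral_indicator measurableSet_Iio, setIntegral_const, hinter,
    Real.volume_real_Ioo_of_le hu, sub_zero]

/- Layer cake: `q t` is the measure of the levels `y ∈ (0, q a]` below it; after exchanging the
integrals, each superlevel set of `q` is an initial interval `(a, c]`, where the hypothesis on the
primitive of `f` applies. -/
theorem norm_integral_smul_le_of_antitoneOn (hab : a ≤ b) (hq : AntitoneOn q (Icc a b))
    (hqb : 0 ≤ q b) (hf : IntervalIntegrable f volume a b)
    (hB : ∀ c ∈ Icc a b, ‖∫ t in a..c, f t‖ ≤ B) :
    ‖∫ t in a..b, q t • f t‖ ≤ q a * B := by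
  have ha : a ∈ Icc a b := left_mem_Icc.2 hab
  have hb : b ∈ Icc a b := right_mem_Icc.2 hab
  obtain ⟨p, hp, hqp⟩ := hq.exists_antitone_extension
    ⟨q b, forall_mem_image.2 fun t ht => hq ht hb ht.2⟩
    ⟨q a, forall_mem_image.2 fun t ht => hq ha ht ht.1⟩
  have hlayer : ∀ t ∈ Ioc a b,
      q t • f t = ∫ y in Ioc 0 (q a), {t | y < p t}.indicator f t := fun t ht => by
    have htab := Ioc_subset_Icc_self ht
    rw [← setIntegral_Ioc_indicator_Iio_const (hqb.trans (hq htab hb ht.2)) (hq ha htab ht.1.le)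
      (f t), hqp htab]
    rfl
  have hlevel : ∀ y, ‖∫ t in Ioc a b, {t | y < p t}.indicator f t‖ ≤ B := fun y => by
    obtain ⟨c, hc, hcy⟩ := exists_Ioc_inter_superlevel_ae_eq_Ioc hp hab y
    rw [setIntegral_indicator (measurableSet_lt measurable_const hp.measurable),
      setIntegral_congr_set hcy, ← intervalIntegral.integral_of_le hc.1]
    exact hB c hc
  have hint : Integrable (Function.uncurry fun t y => {t | y < p t}.indicator f t)
      ((volume.restrict (Ioc a b)).prod (volume.restrict (Ioc 0 (q a)))) :=
    (((intervalIntegrable_iff_integrableOn_Ioc_of_le hab).1 hf).comp_fst _).indicator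
      (measurableSet_lt measurable_snd (hp.measurable.comp measurable_fst))
  rw [intervalIntegral.integral_of_le hab, setIntegral_congr_fun measurableSet_Ioc hlayer,
    integral_integral_swap hint]
  refine (norm_setIntegral_le_of_norm_le_const measure_Ioc_lt_top fun y _ => hlevel y).trans_eq ?_
  rw [Real.volume_real_Ioc_of_le (hqb.trans (hq ha hb hab)), sub_zero, mul_comm]

end Bonnet

theorem norm_integral_smul_deriv_mul_cexp_le {q : ℝ → ℝ} {ψ ψ' : ℝ → ℂ} {a b : ℝ} (hab : a ≤ b)
    (hq : AntitoneOn q (Icc a b)) (hqb : 0 ≤ q b) (hψ : ∀ t ∈ Icc a b, HasDerivAt ψ (ψ' t) t)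
    (hψ' : ContinuousOn ψ' (Icc a b)) (hre : ∀ t ∈ Icc a b, (ψ t).re ≤ 0) :
    ‖∫ t in a..b, q t • (ψ' t * Complex.exp (ψ t))‖ ≤ 2 * q a := by
  have hcont : ContinuousOn (fun t => ψ' t * Complex.exp (ψ t)) (Icc a b) :=
    hψ'.mul (ContinuousOn.cexp fun t ht => (hψ t ht).continuousAt.continuousWithinAt)
  have hexp : ∀ t ∈ Icc a b, ‖Complex.exp (ψ t)‖ ≤ 1 := fun t ht => by
    rw [Complex.norm_exp]
    exact Real.exp_le_one_iff.2 (hre t ht)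
  rw [mul_comm]
  refine norm_integral_smul_le_of_antitoneOn hab hq hqb
    (hcont.intervalIntegrable_of_Icc hab) fun c hc => ?_
  have hsub : uIcc a c ⊆ Icc a b := uIcc_of_le hc.1 ▸ Icc_subset_Icc_right hc.2
  rw [intervalIntegral.integral_eq_sub_of_hasDerivAt (f := fun t => Complex.exp (ψ t))
    (fun t ht => by simpa only [mul_comm] using (hψ t (hsub ht)).cexp)
    (hcont.mono hsub).intervalIntegrable]
  exact (norm_sub_le _ _).trans
    ((add_le_add (hexp c hc) (hexp a (left_mem_Icc.2 hab))).trans_eq one_add_one_eq_two)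

section Fresnel

variable {b : ℂ} {V W : ℝ}

lemma norm_integral_cexp_neg_mul_sq_le (hb : 0 ≤ b.re) (hb0 : b ≠ 0) (hV : 0 < V) (hVW : V ≤ W) :
    ‖∫ w in V..W, Complex.exp (-b * (w : ℂ) ^ 2)‖ ≤ 1 / (‖b‖ * V) := by
  have hpos : ∀ w ∈ Icc V W, 0 < w := fun w hw => hV.trans_le hw.1
  have hosc : ‖∫ w in V..W, (2 * w)⁻¹ • (-b * (2 * w) * Complex.exp (-b * (w : ℂ) ^ 2))‖
      ≤ 2 * (2 * V)⁻¹ := by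
    refine norm_integral_smul_deriv_mul_cexp_le (q := fun w => (2 * w)⁻¹) hVW
      (fun x hx y _ hxy => ?_) ?_ (fun w _ => ?_) (by fun_prop) fun w _ => ?_
    · have := hpos x hx
      dsimp only
      gcongr
    · have := hV.trans_le hVW
      positivity
    · simpa using ((hasDerivAt_pow 2 w).ofReal_comp).const_mul (-b)
    · rw [← Complex.ofReal_pow, Complex.re_mul_ofReal, Complex.neg_re]
      exact mul_nonpos_of_nonpos_of_nonneg (neg_nonpos.2 hb) (sq_nonneg w)
  have hfactor : ∫ w in V..W, (2 * w)⁻¹ • (-b * (2 * w) * Complex.exp (-b * (w : ℂ) ^ 2))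
      = -b * ∫ w in V..W, Complex.exp (-b * (w : ℂ) ^ 2) := by
    rw [← intervalIntegral.integral_const_mul]
    refine intervalIntegral.integral_congr fun w hw => ?_
    have hw0 : (w : ℂ) ≠ 0 := Complex.ofReal_ne_zero.2 (hpos w (uIcc_of_le hVW ▸ hw)).ne'
    simp only [Complex.real_smul, Complex.ofReal_inv, Complex.ofReal_mul, Complex.ofReal_ofNat]
    field_simp
  rw [hfactor, norm_mul, norm_neg] at hosc
  calc ‖∫ w in V..W, Complex.exp (-b * (w : ℂ) ^ 2)‖ ≤ 2 * (2 * V)⁻¹ / ‖b‖ :=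
        (le_div_iff₀' (norm_pos_iff.2 hb0)).2 hosc
    _ = 1 / (‖b‖ * V) := by field_simp

lemma norm_integral_cexp_neg_mul_sq_sub_le_of_re_pos (hb : 0 < b.re) (hV : 0 < V) :
    ‖(∫ w in (0 : ℝ)..V, Complex.exp (-b * (w : ℂ) ^ 2)) - (π / b) ^ (1 / 2 : ℂ) / 2‖
      ≤ 1 / (‖b‖ * V) := by
  have hlim := intervalIntegral_tendsto_integral_Ioi 0
    (integrable_cexp_neg_mul_sq hb).integrableOn tendsto_id
  rw [integral_gaussian_complex_Ioi hb] at hlim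
  refine le_of_tendsto (tendsto_const_nhds.sub hlim).norm ?_
  filter_upwards [eventually_ge_atTop V] with W hVW
  have hint : ∀ u v : ℝ,
      IntervalIntegrable (fun w : ℝ => Complex.exp (-b * (w : ℂ) ^ 2)) volume u v :=
    fun u v => Continuous.intervalIntegrable (by fun_prop) u v
  rw [norm_sub_rev, id, intervalIntegral.integral_interval_sub_left (hint 0 W) (hint 0 V)]
  exact norm_integral_cexp_neg_mul_sq_le hb.le (fun h => by simp [h] at hb) hV hVW

/- On the imaginary axis the improper Gaussian integral converges only conditionally, so it is
reached as the limit of `b + ε` for `ε ↓ 0`, the bound being uniform in `ε`. -/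
lemma norm_integral_cexp_neg_mul_sq_sub_le (hb : 0 ≤ b.re) (hb0 : b ≠ 0) (hV : 0 < V) :
    ‖(∫ w in (0 : ℝ)..V, Complex.exp (-b * (w : ℂ) ^ 2)) - (π / b) ^ (1 / 2 : ℂ) / 2‖
      ≤ 1 / (‖b‖ * V) := by
  have hslit : (π / b : ℂ) ∈ Complex.slitPlane := by
    have hnorm : 0 < Complex.normSq b := Complex.normSq_pos.2 hb0
    rw [Complex.mem_slitPlane_iff, div_eq_mul_inv, Complex.re_ofReal_mul, Complex.im_ofReal_mul,
      Complex.inv_re, Complex.inv_im]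
    rcases hb.lt_or_eq with hre | hre
    · exact Or.inl (by positivity)
    · have him : b.im ≠ 0 := fun him => hb0 (Complex.ext hre.symm him)
      exact Or.inr (mul_ne_zero Real.pi_ne_zero (div_ne_zero (neg_ne_zero.2 him) hnorm.ne'))
  have hintegral : Continuous fun ε : ℝ =>
      ∫ w in (0 : ℝ)..V, Complex.exp (-(b + ε) * (w : ℂ) ^ 2) :=
    intervalIntegral.continuous_parametric_intervalIntegral_of_continuous' (by fun_prop) _ _
  have hroot : ContinuousAt (fun ε : ℝ => (π / (b + ε) : ℂ) ^ (1 / 2 : ℂ)) 0 :=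
    ContinuousAt.cpow (ContinuousAt.div (by fun_prop) (by fun_prop) (by simpa using hb0))
      continuousAt_const (by simpa using hslit)
  have hbound : ContinuousAt (fun ε : ℝ => 1 / (‖b + ε‖ * V)) 0 :=
    ContinuousAt.div (by fun_prop) (by fun_prop) (by simpa using ⟨hb0, hV.ne'⟩)
  have hle : ∀ᶠ ε : ℝ in 𝓝[>] 0,
      ‖(∫ w in (0 : ℝ)..V, Complex.exp (-(b + ε) * (w : ℂ) ^ 2))
        - (π / (b + ε)) ^ (1 / 2 : ℂ) / 2‖ ≤ 1 / (‖b + ε‖ * V) := by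
    filter_upwards [self_mem_nhdsWithin] with ε hε
    exact norm_integral_cexp_neg_mul_sq_sub_le_of_re_pos
      (by simpa using add_pos_of_nonneg_of_pos hb hε) hV
  simpa using le_of_tendsto_of_tendsto
    ((hintegral.continuousAt.sub (hroot.div_const 2)).norm.mono_left nhdsWithin_le_nhds)
    (hbound.mono_left nhdsWithin_le_nhds) hle

lemma norm_integral_neg_cexp_neg_mul_sq_sub_le (hb : 0 ≤ b.re) (hb0 : b ≠ 0) (hV : 0 < V)
    (hW : 0 < W) :
    ‖(∫ w in (-V)..W, Complex.exp (-b * (w : ℂ) ^ 2)) - (π / b) ^ (1 / 2 : ℂ)‖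
      ≤ 1 / (‖b‖ * V) + 1 / (‖b‖ * W) := by
  set f : ℝ → ℂ := fun w => Complex.exp (-b * (w : ℂ) ^ 2)
  have hf : Continuous f := by fun_prop
  have heven : ∫ w in (-V)..0, f w = ∫ w in (0 : ℝ)..V, f w := by
    simpa [f] using (intervalIntegral.integral_comp_neg (a := 0) (b := V) f).symm
  rw [← intervalIntegral.integral_add_adjacent_intervals (hf.intervalIntegrable (-V) 0)
    (hf.intervalIntegrable 0 W), heven,
    ← add_halves ((π / b : ℂ) ^ (1 / 2 : ℂ)), add_sub_add_comm]
  exact norm_add_le_of_le (norm_integral_cexp_neg_mul_sq_sub_le hb hb0 hV)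
    (norm_integral_cexp_neg_mul_sq_sub_le hb hb0 hW)

lemma ofReal_div_I_cpow_half {x : ℝ} (hx : 0 < x) :
    (x / I : ℂ) ^ (1 / 2 : ℂ) = √x * Complex.exp ((-(π / 4) : ℝ) * I) := by
  have hsqrt : ((√x : ℝ) : ℂ) = Complex.exp (Real.log x / 2 : ℝ) := by
    rw [← Complex.ofReal_exp, Real.exp_half, Real.exp_log hx]
  rw [Complex.div_I, ← mul_neg, Complex.cpow_def_of_ne_zero (by simp [hx.ne']),
    Complex.log_ofReal_mul hx (by simp), Complex.log_neg_I, hsqrt, ← Complex.exp_add]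
  push_cast
  ring_nf

end Fresnel

lemma monotoneOn_dslope_of_convexOn {S : Set ℝ} {f : ℝ → ℝ} {a : ℝ} (hf : ConvexOn ℝ S f)
    (ha : a ∈ S) (hfa : DifferentiableAt ℝ f a) : MonotoneOn (dslope f a) S := by
  intro x hx y hy hxy
  by_cases hxa : x = a <;> by_cases hya : y = a
  · rw [hxa, hya]
  · rw [hxa, dslope_same, dslope_of_ne _ hya]
    exact hf.deriv_le_slope ha hy ((hxa.ge.trans hxy).lt_of_ne' hya) hfa
  · rw [hya, dslope_same, dslope_of_ne _ hxa, slope_comm]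
    exact hf.slope_le_deriv hx ha ((hxy.trans hya.le).lt_of_ne hxa) hfa
  · rw [dslope_of_ne _ hxa, dslope_of_ne _ hya]
    exact hf.slope_mono ha ⟨hx, hxa⟩ ⟨hy, hya⟩ hxy

lemma integral_eq_two_mul_re_integral_Ioi {f : ℝ → ℂ} (hf : Integrable f)
    (hconj : ∀ t, f (-t) = (starRingEnd ℂ) (f t)) :
    ∫ t, f t = ((2 * (∫ t in Ioi 0, f t).re : ℝ) : ℂ) := by
  have hIic : ∫ t in Iic 0, f t = (starRingEnd ℂ) (∫ t in Ioi 0, f t) := by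
    rw [← integral_conj, ← neg_zero, ← integral_comp_neg_Ioi, neg_zero]
    simp only [hconj]
  rw [← intervalIntegral.integral_Iic_add_Ioi (b := 0) hf.integrableOn hf.integrableOn, hIic,
    add_comm, Complex.add_conj]

/-- The cubic phase of `Fab`, rescaled so that its critical points are `±1`. -/
noncomputable def airyPhase (t : ℝ) : ℝ := t - t ^ 3 / 3

/-- The oscillating factor of `Fab` after rescaling, at angular frequency `μ`. -/
noncomputable def airyWave (μ t : ℝ) : ℂ := Complex.exp ((μ * airyPhase t : ℝ) * I)

/-- The Morse coordinate of `airyPhase` at its critical point `1`, i.e. the signed square root of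
`airyPhase 1 - airyPhase`. It is smooth on `(-2, ∞)` and singular at `-2`, where `airyPhase` takes
the value `airyPhase 1` again. -/
noncomputable def airyMorse (t : ℝ) : ℝ := (t - 1) * √((t + 2) / 3)

/-- The quotient `(1 - deriv airyMorse t) / (1 - t ^ 2)`, with the common factor `1 - t` cancelled
so that it is also meaningful at `t = 1`. -/
noncomputable def airyMorseQuotient (t : ℝ) : ℝ :=
  (3 + (√((t + 2) / 3))⁻¹) / (6 * (1 + √((t + 2) / 3)) * (1 + t))

section Phase

variable {t a b R μ : ℝ}

lemma hasDerivAt_airyPhase (t : ℝ) : HasDerivAt airyPhase (1 - t ^ 2) t :=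
  ((hasDerivAt_id t).fun_sub ((hasDerivAt_pow 3 t).div_const 3)).congr_deriv (by norm_num)

lemma continuous_airyPhase : Continuous airyPhase :=
  continuous_iff_continuousAt.2 fun t => (hasDerivAt_airyPhase t).continuousAt

lemma airyPhase_neg (t : ℝ) : airyPhase (-t) = -airyPhase t := by
  unfold airyPhase
  ring

lemma continuous_airyWave (μ : ℝ) : Continuous (airyWave μ) := by
  have := continuous_airyPhase
  unfold airyWave
  fun_prop

lemma norm_airyWave (μ t : ℝ) : ‖airyWave μ t‖ = 1 := Complex.norm_exp_ofReal_mul_I _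

lemma airyWave_neg (μ t : ℝ) : airyWave μ (-t) = (starRingEnd ℂ) (airyWave μ t) := by
  rw [airyWave, airyWave, airyPhase_neg, ← Complex.exp_conj, map_mul, Complex.conj_ofReal,
    Complex.conj_I, mul_neg μ, Complex.ofReal_neg, neg_mul, mul_neg]

lemma norm_integral_mul_deriv_airyPhase_mul_airyWave_le {q : ℝ → ℝ} (hμ : 0 < μ) (hab : a ≤ b)
    (hq : AntitoneOn q (Icc a b)) (hqb : 0 ≤ q b) :
    ‖∫ t in a..b, (q t * (1 - t ^ 2)) • airyWave μ t‖ ≤ 2 * q a / μ := by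
  have hosc := norm_integral_smul_deriv_mul_cexp_le (ψ := fun t => (μ * airyPhase t : ℝ) * I)
    (ψ' := fun t => (μ * (1 - t ^ 2) : ℝ) * I) hab hq hqb
    (fun t _ => (((hasDerivAt_airyPhase t).const_mul μ).ofReal_comp).mul_const I) (by fun_prop)
    fun t _ => by simp
  have hfactor : ∫ t in a..b, q t • ((μ * (1 - t ^ 2) : ℝ) * I * airyWave μ t)
      = μ * I * ∫ t in a..b, (q t * (1 - t ^ 2)) • airyWave μ t := by
    rw [← intervalIntegral.integral_const_mul]
    congr with t
    simp only [Complex.real_smul, Complex.ofReal_mul]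
    ring
  unfold airyWave at hfactor ⊢
  rwa [hfactor, norm_mul, norm_mul, Complex.norm_I, mul_one, Complex.norm_real,
    Real.norm_of_nonneg hμ.le, ← le_div_iff₀' hμ] at hosc

lemma airyMorse_sq (ht : -2 ≤ t) : airyMorse t ^ 2 = 2 / 3 - airyPhase t := by
  rw [airyMorse, airyPhase, mul_pow, Real.sq_sqrt (by linarith)]
  ring

lemma hasDerivAt_airyMorse (ht : -2 < t) :
    HasDerivAt airyMorse ((t + 1) / (2 * √((t + 2) / 3))) t := by
  have hpos : 0 < (t + 2) / 3 := by linarith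
  have hprod := ((hasDerivAt_id t).sub_const 1).mul
    ((((hasDerivAt_id t).add_const 2).div_const 3).sqrt hpos.ne')
  refine hprod.congr_deriv ?_
  have hsq : √((t + 2) / 3) ^ 2 = (t + 2) / 3 := Real.sq_sqrt hpos.le
  have hne : √((t + 2) / 3) ≠ 0 := (Real.sqrt_pos.2 hpos).ne'
  simp only [id]
  field_simp
  linarith

lemma continuousOn_deriv_airyMorse : ContinuousOn (deriv airyMorse) (Ioi (-2)) := by
  refine ContinuousOn.congr ?_ fun t ht => (hasDerivAt_airyMorse ht).deriv
  refine ContinuousOn.div (by fun_prop) (by fun_prop) fun t ht => ?_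
  have : 0 < (t + 2) / 3 := by linarith [mem_Ioi.1 ht]
  positivity

lemma airyMorseQuotient_mul (ht : -1 < t) :
    airyMorseQuotient t * (1 - t ^ 2) = 1 - deriv airyMorse t := by
  rw [(hasDerivAt_airyMorse (by linarith)).deriv, airyMorseQuotient]
  have hpos : 0 < √((t + 2) / 3) := Real.sqrt_pos.2 (by linarith)
  have hsq : √((t + 2) / 3) ^ 2 = (t + 2) / 3 := Real.sq_sqrt (by linarith)
  generalize √((t + 2) / 3) = ρ at *
  obtain rfl : t = 3 * ρ ^ 2 - 2 := by linarith
  have : 1 + (3 * ρ ^ 2 - 2) ≠ 0 := by linarith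
  field_simp
  ring

lemma antitoneOn_airyMorseQuotient : AntitoneOn airyMorseQuotient (Ioi (-1)) := by
  intro x hx y _ hxy
  have hx' : 0 < 1 + x := by linarith [mem_Ioi.1 hx]
  have : 0 < √((x + 2) / 3) := Real.sqrt_pos.2 (by linarith)
  unfold airyMorseQuotient
  gcongr

lemma airyMorseQuotient_nonneg (ht : -1 < t) : 0 ≤ airyMorseQuotient t := by
  have : 0 < 1 + t := by linarith
  unfold airyMorseQuotient
  positivity

lemma airyMorseQuotient_zero_le_one : airyMorseQuotient 0 ≤ 1 := by
  have hsqrt : 1 / 2 ≤ √(((0 : ℝ) + 2) / 3) := Real.le_sqrt_of_sq_le (by norm_num)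
  have hinv : (√(((0 : ℝ) + 2) / 3))⁻¹ ≤ 2 := inv_le_of_inv_le₀ (by norm_num) (by linarith)
  rw [airyMorseQuotient, div_le_one (by positivity)]
  linarith

lemma integral_deriv_airyMorse_smul_airyWave (ha : -2 < a) (hb : -2 < b) :
    ∫ t in a..b, deriv airyMorse t • airyWave μ t
      = Complex.exp ((μ * (2 / 3) : ℝ) * I) *
        ∫ w in (airyMorse a)..(airyMorse b), Complex.exp (-(μ * I) * (w : ℂ) ^ 2) := by
  have hsub : uIcc a b ⊆ Ioi (-2) := ordConnected_Ioi.uIcc_subset ha hb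
  rw [← intervalIntegral.integral_deriv_smul_comp (f := airyMorse) (f' := deriv airyMorse)
    (fun t ht => (hasDerivAt_airyMorse (hsub ht)).differentiableAt.hasDerivAt)
    (continuousOn_deriv_airyMorse.mono hsub) (by fun_prop),
    ← intervalIntegral.integral_const_mul]
  refine intervalIntegral.integral_congr fun t ht => ?_
  have hphase : airyPhase t = 2 / 3 - airyMorse t ^ 2 := by
    linarith [airyMorse_sq (hsub ht).le]
  simp only [Function.comp, mul_smul_comm, ← Complex.exp_add, airyWave, hphase]
  push_cast
  ring_nf

lemma norm_integral_deriv_airyMorse_smul_airyWave_sub_le (hμ : 0 < μ) (hR : 2 ≤ R) :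
    ‖(∫ t in 0..R, deriv airyMorse t • airyWave μ t)
      - √(π / μ) * Complex.exp ((μ * (2 / 3) - π / 4 : ℝ) * I)‖ ≤ 4 / μ := by
  have hroot : (π / (μ * I) : ℂ) ^ (1 / 2 : ℂ) = √(π / μ) * Complex.exp ((-(π / 4) : ℝ) * I) := by
    rw [← ofReal_div_I_cpow_half (by positivity), Complex.ofReal_div, div_div]
  have hmain : √(π / μ) * Complex.exp ((μ * (2 / 3) - π / 4 : ℝ) * I)
      = Complex.exp ((μ * (2 / 3) : ℝ) * I) * (π / (μ * I) : ℂ) ^ (1 / 2 : ℂ) := by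
    rw [hroot, mul_left_comm, ← Complex.exp_add, ← add_mul, ← Complex.ofReal_add, sub_eq_add_neg]
  have hzero : airyMorse 0 = -√(2 / 3) := by norm_num [airyMorse]
  have hV : 1 / 2 ≤ √(2 / 3 : ℝ) := Real.le_sqrt_of_sq_le (by norm_num)
  have hW : 1 / 2 ≤ airyMorse R := by
    have : 1 ≤ √((R + 2) / 3) := Real.le_sqrt_of_sq_le (by linarith)
    unfold airyMorse
    nlinarith
  have hnorm : ‖(μ * I : ℂ)‖ = μ := by simp [hμ.le]
  rw [integral_deriv_airyMorse_smul_airyWave (by norm_num) (by linarith), hmain, ← mul_sub,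
    norm_mul, Complex.norm_exp_ofReal_mul_I, one_mul, hzero]
  calc _ ≤ 1 / (‖(μ * I : ℂ)‖ * √(2 / 3)) + 1 / (‖(μ * I : ℂ)‖ * airyMorse R) :=
        norm_integral_neg_cexp_neg_mul_sq_sub_le (by simp) (by simp [hμ.ne']) (by linarith)
          (by linarith)
    _ ≤ 1 / (μ * (1 / 2)) + 1 / (μ * (1 / 2)) := by
        rw [hnorm]
        gcongr
    _ = 4 / μ := by
        field_simp
        norm_num

end Phase

section Weight

variable {g : ℝ → ℝ} {μ R : ℝ}

/-- The quotient `(g (t ^ 2) - g 1 * deriv airyMorse t) / (1 - t ^ 2)`, in a form that is also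
meaningful at `t = 1`. -/
noncomputable def weightQuotient (g : ℝ → ℝ) (t : ℝ) : ℝ :=
  -dslope g 1 (t ^ 2) + g 1 * airyMorseQuotient t

lemma weightQuotient_mul {t : ℝ} (ht : -1 < t) :
    weightQuotient g t * (1 - t ^ 2) = g (t ^ 2) - g 1 * deriv airyMorse t := by
  have hdslope : (t ^ 2 - 1) * dslope g 1 (t ^ 2) = g (t ^ 2) - g 1 := sub_smul_dslope g 1 (t ^ 2)
  rw [weightQuotient]
  linear_combination hdslope + g 1 * airyMorseQuotient_mul ht

lemma antitoneOn_weightQuotient (hg : ConvexOn ℝ (Ici 0) g) (hg1 : 0 ≤ g 1)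
    (hg' : DifferentiableAt ℝ g 1) : AntitoneOn (weightQuotient g) (Ici 0) := by
  have hdslope := monotoneOn_dslope_of_convexOn hg (mem_Ici.2 zero_le_one) hg'
  intro x hx y hy hxy
  have hx0 : 0 ≤ x := hx
  have hy0 : 0 ≤ y := hy
  refine add_le_add (neg_le_neg (hdslope (sq_nonneg x) (sq_nonneg y) (by gcongr)))
    (mul_le_mul_of_nonneg_left (antitoneOn_airyMorseQuotient ?_ ?_ hxy) hg1)
  · exact neg_one_lt_zero.trans_le hx0
  · exact neg_one_lt_zero.trans_le hy0

lemma weightQuotient_zero_le (hg1 : 0 ≤ g 1) : weightQuotient g 0 ≤ g 0 := by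
  have hdslope : (0 - 1) * dslope g 1 0 = g 0 - g 1 := sub_smul_dslope g 1 0
  have := mul_le_of_le_one_right hg1 airyMorseQuotient_zero_le_one
  rw [weightQuotient, zero_pow two_ne_zero]
  linarith

lemma weightQuotient_nonneg {t : ℝ} (hg : AntitoneOn g (Ici 0)) (hg1 : 0 ≤ g 1) (ht : 1 < t) :
    0 ≤ weightQuotient g t := by
  have hlt : 1 < t ^ 2 := one_lt_pow₀ ht two_ne_zero
  refine add_nonneg (neg_nonneg.2 ?_) (mul_nonneg hg1 (airyMorseQuotient_nonneg (by linarith)))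
  rw [dslope_of_ne _ hlt.ne']
  exact hg.slope_nonpos (mem_Ici.2 zero_le_one) (sq_nonneg t)

lemma integral_weightQuotient_mul_smul_airyWave (hg : AntitoneOn g (Ici 0)) (hR : 0 ≤ R) :
    ∫ t in 0..R, (weightQuotient g t * (1 - t ^ 2)) • airyWave μ t
      = (∫ t in 0..R, g (t ^ 2) • airyWave μ t)
        - g 1 * ∫ t in 0..R, deriv airyMorse t • airyWave μ t := by
  have hIcc : uIcc 0 R = Icc 0 R := uIcc_of_le hR
  have hanti : AntitoneOn (fun t => g (t ^ 2)) (uIcc 0 R) := fun x hx y _ hxy => by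
    have hx0 : 0 ≤ x := (hIcc ▸ hx).1
    exact hg (sq_nonneg x) (sq_nonneg y) (by gcongr)
  have hmorse : ContinuousOn (deriv airyMorse) (uIcc 0 R) :=
    continuousOn_deriv_airyMorse.mono fun t ht => by
      rw [hIcc] at ht
      exact (by norm_num : (-2 : ℝ) < 0).trans_le ht.1
  have hint : IntervalIntegrable (fun t => g (t ^ 2) • airyWave μ t) volume 0 R :=
    hanti.intervalIntegrable.smul_continuousOn (continuous_airyWave μ).continuousOn
  have hint' : IntervalIntegrable (fun t => g 1 * deriv airyMorse t • airyWave μ t) volume 0 R :=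
    (hmorse.smul (continuous_airyWave μ).continuousOn).intervalIntegrable.const_mul _
  rw [← intervalIntegral.integral_const_mul, ← intervalIntegral.integral_sub hint hint']
  refine intervalIntegral.integral_congr fun t ht => ?_
  rw [hIcc] at ht
  simp only [weightQuotient_mul (neg_one_lt_zero.trans_le ht.1), sub_smul, mul_smul,
    Complex.real_smul]

theorem norm_integral_smul_airyWave_sub_le (hconv : ConvexOn ℝ (Ici 0) g)
    (hanti : AntitoneOn g (Ici 0)) (hg1 : 0 ≤ g 1) (hg' : DifferentiableAt ℝ g 1) (hμ : 0 < μ)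
    (hR : 2 ≤ R) :
    ‖(∫ t in 0..R, g (t ^ 2) • airyWave μ t)
      - g 1 * (√(π / μ) * Complex.exp ((μ * (2 / 3) - π / 4 : ℝ) * I))‖ ≤ 6 * g 0 / μ := by
  have hR0 : 0 ≤ R := by linarith
  have hg10 : g 1 ≤ g 0 := hanti self_mem_Ici (mem_Ici.2 zero_le_one) zero_le_one
  have hosc : ‖∫ t in 0..R, (weightQuotient g t * (1 - t ^ 2)) • airyWave μ t‖ ≤ 2 * g 0 / μ :=
    (norm_integral_mul_deriv_airyPhase_mul_airyWave_le hμ hR0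
      ((antitoneOn_weightQuotient hconv hg1 hg').mono Icc_subset_Ici_self)
      (weightQuotient_nonneg hanti hg1 (by linarith))).trans
      (by gcongr; exact weightQuotient_zero_le hg1)
  have hmorse := norm_integral_deriv_airyMorse_smul_airyWave_sub_le hμ hR
  set J := ∫ t in 0..R, deriv airyMorse t • airyWave μ t
  set K : ℂ := √(π / μ) * Complex.exp ((μ * (2 / 3) - π / 4 : ℝ) * I)
  calc _ = ‖(∫ t in 0..R, (weightQuotient g t * (1 - t ^ 2)) • airyWave μ t)
          + g 1 * (J - K)‖ := by
        rw [integral_weightQuotient_mul_smul_airyWave hanti hR0]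
        congr 1
        ring
    _ ≤ 2 * g 0 / μ + g 0 * (4 / μ) := by
        refine norm_add_le_of_le hosc ?_
        rw [norm_mul, Complex.norm_real, Real.norm_of_nonneg hg1]
        exact mul_le_mul hg10 hmorse (norm_nonneg _) (hg1.trans hg10)
    _ = 6 * g 0 / μ := by ring

theorem norm_integral_smul_airyWave_sub_cos_le (hconv : ConvexOn ℝ (Ici 0) g)
    (hanti : AntitoneOn g (Ici 0)) (hg1 : 0 ≤ g 1) (hg' : DifferentiableAt ℝ g 1) (hμ : 0 < μ)
    (hint : Integrable fun t => g (t ^ 2)) :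
    ‖(∫ t, g (t ^ 2) • airyWave μ t)
      - (2 * (g 1 * √(π / μ) * Real.cos (μ * (2 / 3) - π / 4)) : ℝ)‖ ≤ 12 * g 0 / μ := by
  have hwave : Integrable fun t => g (t ^ 2) • airyWave μ t :=
    hint.smul_bdd 1 (continuous_airyWave μ).aestronglyMeasurable
      (Eventually.of_forall fun t => (norm_airyWave μ t).le)
  have hconj : ∀ t, g ((-t) ^ 2) • airyWave μ (-t) = (starRingEnd ℂ) (g (t ^ 2) • airyWave μ t) :=
    fun t => by rw [neg_sq, airyWave_neg, Complex.real_smul, Complex.real_smul, map_mul,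
      Complex.conj_ofReal]
  set J := ∫ t in Ioi 0, g (t ^ 2) • airyWave μ t
  set M : ℂ := g 1 * (√(π / μ) * Complex.exp ((μ * (2 / 3) - π / 4 : ℝ) * I)) with hM
  have hJM : ‖J - M‖ ≤ 6 * g 0 / μ := by
    have hlim := intervalIntegral_tendsto_integral_Ioi 0 hwave.integrableOn tendsto_id
    refine le_of_tendsto (hlim.sub_const M).norm ?_
    filter_upwards [eventually_ge_atTop 2] with R hR
    exact norm_integral_smul_airyWave_sub_le hconv hanti hg1 hg' hμ hR
  have hMre : M.re = g 1 * √(π / μ) * Real.cos (μ * (2 / 3) - π / 4) := by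
    rw [hM, Complex.re_ofReal_mul, Complex.re_ofReal_mul, Complex.exp_ofReal_mul_I_re, mul_assoc]
  rw [integral_eq_two_mul_re_integral_Ioi hwave hconj, ← hMre, ← Complex.ofReal_sub,
    Complex.norm_real, ← mul_sub, ← Complex.sub_re, norm_mul, Real.norm_ofNat]
  calc 2 * ‖(J - M).re‖ ≤ 2 * (6 * g 0 / μ) := by
        gcongr
        exact (Complex.abs_re_le_norm _).trans hJM
    _ = 12 * g 0 / μ := by ring

end Weight

lemma convexOn_exp_neg_mul (c : ℝ) : ConvexOn ℝ univ fun u => Real.exp (-c * u) :=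
  convexOn_exp.comp_linearMap (LinearMap.mul ℝ ℝ (-c))

lemma antitone_exp_neg_mul {c : ℝ} (hc : 0 ≤ c) : Antitone fun u => Real.exp (-c * u) :=
  Real.exp_monotone.comp_antitone (antitone_mul_left (neg_nonpos.2 hc))

section Rescaling

variable {β s : ℝ}

lemma Fab_neg_three_mul_mul_sq (β : ℝ) (hs : 0 < s) :
    Fab (-(3 * β * s ^ 2)) β
      = s * ∫ t, Real.exp (-(π * s ^ 2) * t ^ 2) • airyWave (6 * π * β * s ^ 3) t := by
  set f : ℝ → ℂ := fun x => (gauss x : ℂ) * Complex.exp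
    (2 * π * I * ((-β * x ^ 3 - -(3 * β * s ^ 2) * x : ℝ) : ℂ))
  have hscale : ∫ x, f x = s * ∫ t, f (s * t) := by
    rw [Measure.integral_comp_mul_left f s, abs_of_pos (inv_pos.2 hs), ← Complex.real_smul,
      smul_inv_smul₀ hs.ne']
  rw [Fab, hscale]
  congr 2 with t
  simp only [f, gauss, airyWave, airyPhase, Complex.real_smul]
  congr 2
  · ring_nf
  · push_cast
    ring

lemma norm_Fab_sub_le (hβ : 0 < β) (hs : 0 < s) :
    ‖Fab (-(3 * β * s ^ 2)) β
      - (√2 * Real.exp (-(π * s ^ 2)) / √(3 * β * s) * Real.cos (π / 4 - 4 * π * β * s ^ 3) : ℝ)‖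
      ≤ 6 / π / (3 * β * s ^ 2) := by
  have hμ : 0 < 6 * π * β * s ^ 3 := by positivity
  have hairy := norm_integral_smul_airyWave_sub_cos_le (g := fun u => Real.exp (-(π * s ^ 2) * u))
    ((convexOn_exp_neg_mul _).subset (subset_univ _) (convex_Ici 0))
    ((antitone_exp_neg_mul (by positivity)).antitoneOn _) (by positivity) (by fun_prop) hμ
    (integrable_exp_neg_mul_sq (by positivity))
  have hamp : √2 / √(3 * β * s) = s * (2 * √(π / (6 * π * β * s ^ 3))) := by
    have hsq : 2 / (3 * β * s) = (2 * s) ^ 2 * (π / (6 * π * β * s ^ 3)) := by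
      field_simp
      norm_num
    rw [← Real.sqrt_div zero_le_two, hsq, Real.sqrt_mul (sq_nonneg _),
      Real.sqrt_sq (by positivity)]
    ring
  have hphase : Real.cos (π / 4 - 4 * π * β * s ^ 3)
      = Real.cos (6 * π * β * s ^ 3 * (2 / 3) - π / 4) := by
    rw [← Real.cos_neg]
    ring_nf
  have hmain : √2 * Real.exp (-(π * s ^ 2)) / √(3 * β * s) * Real.cos (π / 4 - 4 * π * β * s ^ 3)
      = s * (2 * (Real.exp (-(π * s ^ 2) * 1) * √(π / (6 * π * β * s ^ 3))
        * Real.cos (6 * π * β * s ^ 3 * (2 / 3) - π / 4))) := by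
    rw [mul_div_right_comm, hamp, hphase]
    ring_nf
  rw [hmain, Fab_neg_three_mul_mul_sq β hs, Complex.ofReal_mul s, ← mul_sub, norm_mul,
    Complex.norm_real, Real.norm_of_nonneg hs.le]
  refine (mul_le_mul_of_nonneg_left hairy hs.le).trans_eq ?_
  simp only [mul_zero, Real.exp_zero]
  field_simp
  norm_num

lemma rpow_quarter_three_mul_abs_mul (hβ : 0 < β) (hs : 0 < s) :
    (3 * (3 * β * s ^ 2) * β) ^ ((1 : ℝ) / 4) = √(3 * β * s) := by
  rw [show 3 * (3 * β * s ^ 2) * β = (3 * β * s) ^ (2 : ℝ) by rw [Real.rpow_two]; ring,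
    ← Real.rpow_mul (by positivity), Real.sqrt_eq_rpow]
  norm_num

lemma rpow_three_halves_div (hβ : 0 < β) (hs : 0 < s) :
    (3 * β * s ^ 2) ^ ((3 : ℝ) / 2) / ((3 : ℝ) ^ ((3 : ℝ) / 2) * β ^ ((1 : ℝ) / 2))
      = β * s ^ 3 := by
  have hs3 : (s ^ 2) ^ ((3 : ℝ) / 2) = s ^ 3 := by
    rw [← Real.rpow_natCast_mul hs.le]
    norm_num
  have hβ3 : β ^ ((3 : ℝ) / 2) = β * β ^ ((1 : ℝ) / 2) := by
    rw [← Real.rpow_one_add' hβ.le (by norm_num)]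
    norm_num
  rw [Real.mul_rpow (by positivity) (by positivity), Real.mul_rpow (by positivity) hβ.le, hs3, hβ3]
  field_simp

end Rescaling

theorem stmt8 :
    ∃ C : ℝ, ∀ α β : ℝ, α < 0 → 0 < β →
      ‖Fab α β -
        (((2 : ℝ) ^ ((1 : ℝ)/2) * Real.exp (-(Real.pi * |α|) / (3 * β)) /
            (3 * |α| * β) ^ ((1 : ℝ)/4) *
            Real.cos (2 * Real.pi *
              (1/8 - 2 * |α| ^ ((3 : ℝ)/2) / ((3 : ℝ) ^ ((3 : ℝ)/2) * β ^ ((1 : ℝ)/2)))) : ℝ) : ℂ)‖ ≤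
        C / |α| := by
  refine ⟨6 / π, fun α β hα hβ => ?_⟩
  obtain ⟨s, hs, rfl⟩ : ∃ s, 0 < s ∧ α = -(3 * β * s ^ 2) := by
    refine ⟨√(-α / (3 * β)), Real.sqrt_pos.2 (div_pos (neg_pos.2 hα) (by positivity)), ?_⟩
    rw [Real.sq_sqrt (div_nonneg (neg_nonneg.2 hα.le) (by positivity))]
    field_simp
  have hexp : -(π * (3 * β * s ^ 2)) / (3 * β) = -(π * s ^ 2) := by field_simp
  have hphase : 2 * π * (1 / 8 - 2 * (β * s ^ 3)) = π / 4 - 4 * π * β * s ^ 3 := by ring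
  rw [abs_neg, abs_of_pos (by positivity), ← Real.sqrt_eq_rpow, hexp,
    rpow_quarter_three_mul_abs_mul hβ hs, mul_div_assoc 2, rpow_three_halves_div hβ hs, hphase]
  exact norm_Fab_sub_le hβ hs
end

section
/- For B ≥ 1 let N_aff(B) be the number of quadruples (x₀,x₁,x₂,x₃) ∈ ℤ⁴ with x₀² = x₁x₂³ + x₁³x₃, x₀ ≥ 1, x₁ ≥ 1, gcd(x₁,x₂,x₃) = 1, x₁ ≤ B, |x₂| ≤ B, |x₃| ≤ B, x₀ ≤ B², and let N_tors(B) be the number of tuples (η₁,…,η₈,α₁,α₂,α₃) ∈ ℤ¹¹ satisfying: the torsor equation η₁²η₂α₁³ + η₇α₂² + η₄η₅²η₆³η₈⁴α₃ = 0; the positivity conditions η₁,…,η₈ ≥ 1 and α₂ ≥ 1; the height conditions η₁²η₂⁴η₃⁶η₄⁵η₅⁴η₆³η₇³η₈² ≤ B, |η₁²η₂³η₃⁴η₄³η₅²η₆η₇² α₁| ≤ B, |α₃| ≤ B, and η₁³η₂⁶η₃⁹η₄⁷η₅⁵η₆³η₇⁵η₈ α₂ ≤ B²; and the coprimality conditions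 gcd(α₁, η₂η₃η₄η₅η₆η₇η₈) = 1, gcd(α₂, η₁η₂η₃η₄η₅η₆η₈) = 1, gcd(α₃, η₁η₂η₃η₄η₅η₆η₇) = 1, gcd(η₈, η₁η₂η₃η₄η₅η₇) = 1, gcd(η₇, η₁η₂η₄η₅η₆) = 1, gcd(η₆, η₁η₂η₃η₄) = 1, gcd(η₅, η₁η₂η₃) = 1, gcd(η₄, η₁η₂) = 1, gcd(η₃, η₁) = 1. Then N_aff(B) = N_tors(B) + O(B^{2/3}) as B → ∞. -/
open scoped BigOperators

/-- `N_aff(B)`: the number of quadruples `(x₀,x₁,x₂,x₃) ∈ ℤ⁴` with `x₀² = x₁x₂³ + x₁³x₃`,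
`x₀ ≥ 1`, `x₁ ≥ 1`, `gcd(x₁,x₂,x₃) = 1`, `x₁ ≤ B`, `|x₂| ≤ B`, `|x₃| ≤ B`, `x₀ ≤ B²`. -/
noncomputable def Naff (B : ℝ) : ℕ :=
  Nat.card {x : ℤ × ℤ × ℤ × ℤ //
    x.1 ^ 2 = x.2.1 * x.2.2.1 ^ 3 + x.2.1 ^ 3 * x.2.2.2 ∧
    1 ≤ x.1 ∧ 1 ≤ x.2.1 ∧
    Int.gcd x.2.1 (Int.gcd x.2.2.1 x.2.2.2) = 1 ∧
    (x.2.1 : ℝ) ≤ B ∧ |(x.2.2.1 : ℝ)| ≤ B ∧ |(x.2.2.2 : ℝ)| ≤ B ∧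
    (x.1 : ℝ) ≤ B ^ 2}

/-- `N_tors(B)`: the number of tuples `(η₁,…,η₈,α₁,α₂,α₃) ∈ ℤ¹¹` on the universal torsor
`η₁²η₂α₁³ + η₇α₂² + η₄η₅²η₆³η₈⁴α₃ = 0` subject to the positivity, height and coprimality
conditions. Here `v.1 i` is `η_{i+1}`, `v.2.1 = α₁`, `v.2.2.1 = α₂`, `v.2.2.2 = α₃`. -/
noncomputable def Ntors (B : ℝ) : ℕ :=
  Nat.card {v : (Fin 8 → ℤ) × ℤ × ℤ × ℤ //
    v.1 0 ^ 2 * v.1 1 * v.2.1 ^ 3 + v.1 6 * v.2.2.1 ^ 2 +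
      v.1 3 * v.1 4 ^ 2 * v.1 5 ^ 3 * v.1 7 ^ 4 * v.2.2.2 = 0 ∧
    (∀ i, 1 ≤ v.1 i) ∧ 1 ≤ v.2.2.1 ∧
    ((v.1 0 ^ 2 * v.1 1 ^ 4 * v.1 2 ^ 6 * v.1 3 ^ 5 * v.1 4 ^ 4 * v.1 5 ^ 3 * v.1 6 ^ 3 *
        v.1 7 ^ 2 : ℤ) : ℝ) ≤ B ∧
    |((v.1 0 ^ 2 * v.1 1 ^ 3 * v.1 2 ^ 4 * v.1 3 ^ 3 * v.1 4 ^ 2 * v.1 5 * v.1 6 ^ 2 *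
        v.2.1 : ℤ) : ℝ)| ≤ B ∧
    |((v.2.2.2 : ℤ) : ℝ)| ≤ B ∧
    ((v.1 0 ^ 3 * v.1 1 ^ 6 * v.1 2 ^ 9 * v.1 3 ^ 7 * v.1 4 ^ 5 * v.1 5 ^ 3 * v.1 6 ^ 5 *
        v.1 7 * v.2.2.1 : ℤ) : ℝ) ≤ B ^ 2 ∧
    Int.gcd v.2.1 (v.1 1 * v.1 2 * v.1 3 * v.1 4 * v.1 5 * v.1 6 * v.1 7) = 1 ∧
    Int.gcd v.2.2.1 (v.1 0 * v.1 1 * v.1 2 * v.1 3 * v.1 4 * v.1 5 * v.1 7) = 1 ∧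
    Int.gcd v.2.2.2 (v.1 0 * v.1 1 * v.1 2 * v.1 3 * v.1 4 * v.1 5 * v.1 6) = 1 ∧
    Int.gcd (v.1 7) (v.1 0 * v.1 1 * v.1 2 * v.1 3 * v.1 4 * v.1 6) = 1 ∧
    Int.gcd (v.1 6) (v.1 0 * v.1 1 * v.1 3 * v.1 4 * v.1 5) = 1 ∧
    Int.gcd (v.1 5) (v.1 0 * v.1 1 * v.1 2 * v.1 3) = 1 ∧
    Int.gcd (v.1 4) (v.1 0 * v.1 1 * v.1 2) = 1 ∧
    Int.gcd (v.1 3) (v.1 0 * v.1 1) = 1 ∧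
    Int.gcd (v.1 2) (v.1 0) = 1}

open Set Matrix

/-!
Put `g = gcd(x₁, x₂)` and write `x₁ = g y`, `x₂ = -g α₁`, `x₃ = -α₃`. The points counted by
`Naff` become solutions of `x₀² + g³ y (g α₁³ + y² α₃) = 0` with `gcd(y, α₁) = gcd(g, α₃) = 1`.
At every prime, the valuation vector of `(g, y, x₀)` therefore lies on the tropical surface
`2 v(x₀) ≥ 3 v(g) + v(y) + min(v(g), 2 v(y))`, with equality unless `v(g) = 2 v(y)`.
The lattice points of that surface are covered by eight unimodular plane cones on nine rays, any
two cones meeting along a common face, so each of them is uniquely a combination of two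
adjacent rays. Multiplying over all primes, `(g, y, x₀)` is uniquely a triple of monomials in
nine positive integers `η₁, …, η₈, α₂`, those attached to non-adjacent rays being coprime.
This substitution turns the equation into the torsor equation times a monomial and identifies the
height conditions, so the two counts agree for every `B`.
-/

section MonomialMap

variable {ι κ : Type*}

/-- Families of positive integers whose vector of `p`-adic valuations lies in `P` for every prime
`p`. All `p : ℕ` are allowed: at a non-prime `p` the factorizations vanish, so the condition there
is just `0 ∈ P`. -/
def locallyIn (P : Set (ι → ℕ)) : Set (ι → ℕ) :=
  {t | (∀ i, t i ≠ 0) ∧ ∀ p, (fun i => (t i).factorization p) ∈ P}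

variable [Fintype ι] {A : Matrix κ ι ℕ} {P : Set (ι → ℕ)} {Q : Set (κ → ℕ)}

/-- The map `(t i)ᵢ ↦ (∏ᵢ t i ^ A k i)ₖ` between tori with exponent matrix `A`; on valuations it is
multiplication by `A`. -/
def monomialMap (A : Matrix κ ι ℕ) (t : ι → ℕ) : κ → ℕ := fun k => ∏ i, t i ^ A k i

lemma monomialMap_ne_zero (A : Matrix κ ι ℕ) {t : ι → ℕ} (ht : ∀ i, t i ≠ 0) (k : κ) :
    monomialMap A t k ≠ 0 :=
  Finset.prod_ne_zero_iff.mpr fun i _ => pow_ne_zero _ (ht i)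

lemma isCoprime_monomialMap_iff {t : ι → ℕ} {k : κ} {a : ℤ} :
    IsCoprime (monomialMap A t k : ℤ) a ↔ ∀ i, A k i ≠ 0 → IsCoprime (t i : ℤ) a := by
  simp only [monomialMap, Nat.cast_prod, Nat.cast_pow, IsCoprime.prod_left_iff, Finset.mem_univ,
    true_imp_iff]
  refine forall_congr' fun i => ?_
  rcases Nat.eq_zero_or_pos (A k i) with h | h
  · simp [h, isCoprime_one_left]
  · simp [IsCoprime.pow_left_iff h, h.ne']

lemma factorization_monomialMap (A : Matrix κ ι ℕ) {t : ι → ℕ} (ht : ∀ i, t i ≠ 0) (p : ℕ) :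
    (fun k => (monomialMap A t k).factorization p) = A *ᵥ fun i => (t i).factorization p := by
  ext k
  rw [monomialMap, Nat.factorization_prod_apply fun i _ => pow_ne_zero _ (ht i)]
  simp only [Nat.factorization_pow, Finsupp.smul_apply, smul_eq_mul, mulVec, dotProduct]

lemma mapsTo_monomialMap (h : MapsTo (A *ᵥ ·) P Q) :
    MapsTo (monomialMap A) (locallyIn P) (locallyIn Q) := fun _ ⟨ht, htP⟩ =>
  ⟨monomialMap_ne_zero A ht, fun p => factorization_monomialMap A ht p ▸ h (htP p)⟩

lemma injOn_monomialMap (h : InjOn (A *ᵥ ·) P) : InjOn (monomialMap A) (locallyIn P) := by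
  rintro t ⟨ht, htP⟩ t' ⟨ht', htP'⟩ heq
  have hval (p : ℕ) : (fun i => (t i).factorization p) = fun i => (t' i).factorization p :=
    h (htP p) (htP' p) <| by
      simp only [← factorization_monomialMap A ht, ← factorization_monomialMap A ht', heq]
  ext i
  exact Nat.eq_of_factorization_eq (ht i) (ht' i) fun p => congrFun (hval p) i

lemma surjOn_monomialMap [Finite κ] (h₀ : 0 ∈ P) (hinj : InjOn (A *ᵥ ·) P)
    (hsurj : SurjOn (A *ᵥ ·) P Q) :
    SurjOn (monomialMap A) (locallyIn P) (locallyIn Q) := by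
  have := Fintype.ofFinite κ
  rintro x ⟨hx, hxQ⟩
  choose e heP he using fun p => hsurj (hxQ p)
  have he_zero (i : ι) (p : ℕ) (hp : e p i ≠ 0) : p ∈ (∏ k, x k).primeFactors := by
    contrapose! hp
    have hxp : (fun k => (x k).factorization p) = 0 := by
      ext k
      refine Finsupp.notMem_support_iff.mp fun hk => hp ?_
      exact Nat.primeFactors_mono (Finset.dvd_prod_of_mem x (Finset.mem_univ k))
        (Finset.prod_ne_zero_iff.mpr fun k _ => hx k) hk
    have : e p = 0 := hinj (heP p) h₀ <| by simpa only [mulVec_zero, hxp] using he p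
    simp [this]
  let g (i : ι) : ℕ →₀ ℕ := Finsupp.onFinset _ (e · i) (he_zero i)
  have hg_prime (i : ι) : ∀ p ∈ (g i).support, p.Prime := fun p hp =>
    Nat.prime_of_mem_primeFactors (Finsupp.support_onFinset_subset hp)
  let t (i : ι) : ℕ := (g i).prod (· ^ ·)
  have ht (i : ι) : t i ≠ 0 :=
    Finset.prod_ne_zero_iff.mpr fun p hp => pow_ne_zero _ (hg_prime i p hp).ne_zero
  have ht_val (p : ℕ) : (fun i => (t i).factorization p) = e p := by
    ext i
    simp only [t, Nat.prod_pow_factorization_eq_self (hg_prime i), g, Finsupp.onFinset_apply]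
  refine ⟨t, ⟨ht, fun p => ht_val p ▸ heP p⟩, ?_⟩
  ext k
  refine Nat.eq_of_factorization_eq (monomialMap_ne_zero A ht k) (hx k) fun p => ?_
  exact congrFun (((factorization_monomialMap A ht p).trans (ht_val p ▸ rfl)).trans (he p)) k

theorem bijOn_monomialMap [Finite κ] (h₀ : 0 ∈ P) (h : BijOn (A *ᵥ ·) P Q) :
    BijOn (monomialMap A) (locallyIn P) (locallyIn Q) :=
  ⟨mapsTo_monomialMap h.mapsTo, injOn_monomialMap h.injOn,
    surjOn_monomialMap h₀ h.injOn h.surjOn⟩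

end MonomialMap

section CliqueSupport

variable {V : Type*} {G : SimpleGraph V}

lemma exists_adj_subset_of_isClique [Nonempty V] (hG : G.CliqueFree 3)
    (hadj : ∀ v, ∃ w, G.Adj v w) {s : Set V} (hs : G.IsClique s) :
    ∃ v w, G.Adj v w ∧ s ⊆ {v, w} := by
  classical
  rcases s.eq_empty_or_nonempty with rfl | ⟨v, hv⟩
  · obtain ⟨w, hw⟩ := hadj (Classical.arbitrary V)
    exact ⟨_, w, hw, empty_subset _⟩
  by_cases h : ∃ w ∈ s, v ≠ w
  · obtain ⟨w, hw, hvw⟩ := h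
    refine ⟨v, w, hs hv hw hvw, fun u hu => ?_⟩
    by_contra! hu'
    simp only [mem_insert_iff, mem_singleton_iff, not_or] at hu'
    exact hG {u, v, w} (SimpleGraph.is3Clique_triple_iff.mpr
      ⟨hs hu hv hu'.1, hs hu hw hu'.2, hs hv hw hvw⟩)
  · push Not at h
    obtain ⟨w, hw⟩ := hadj v
    exact ⟨v, w, hw, fun u hu => by simp [h u hu]⟩

/-- Exponent vectors supported on a clique of `G`: the lattice points of the fan whose cones are the
faces of the clique complex of `G`. -/
def cliqueSupported (G : SimpleGraph V) : Set (V → ℕ) :=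
  {e | G.IsClique (Function.support e)}

lemma mem_cliqueSupported_iff [Nonempty V] [DecidableEq V] (hG : G.CliqueFree 3)
    (hadj : ∀ v, ∃ w, G.Adj v w) {e : V → ℕ} :
    e ∈ cliqueSupported G ↔ ∃ v w, G.Adj v w ∧ ∃ m n, e = Pi.single v m + Pi.single w n := by
  refine ⟨fun he => ?_, ?_⟩
  · obtain ⟨v, w, hvw, hsub⟩ := exists_adj_subset_of_isClique hG hadj he
    refine ⟨v, w, hvw, e v, e w, ?_⟩
    ext u
    rcases eq_or_ne u v with rfl | huv
    · simp [hvw.ne]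
    rcases eq_or_ne u w with rfl | huw
    · simp [hvw.ne']
    have hu : e u = 0 := by_contra fun hu => by simpa [huv, huw] using hsub hu
    simp [huv, huw, hu]
  · rintro ⟨v, w, hvw, m, n, rfl⟩
    refine (SimpleGraph.isClique_pair.mpr fun _ => hvw).subset fun u hu => ?_
    by_contra! h
    simp only [mem_insert_iff, mem_singleton_iff, not_or] at h
    simp [h] at hu

lemma mem_locallyIn_cliqueSupported_iff {t : V → ℕ} :
    t ∈ locallyIn (cliqueSupported G) ↔
      (∀ v, t v ≠ 0) ∧ Pairwise fun v w => ¬G.Adj v w → (t v).Coprime (t w) := by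
  refine and_congr_right fun ht => ?_
  have hmem (p : ℕ) (v : V) :
      v ∈ Function.support (fun v => (t v).factorization p) ↔ p ∈ (t v).primeFactors := by
    rw [← Nat.support_factorization, Finsupp.mem_support_iff, Function.mem_support]
  simp only [cliqueSupported, Set.mem_ofPred_eq, SimpleGraph.IsClique, Set.Pairwise, Pairwise, hmem,
    ← Nat.disjoint_primeFactors (ht _) (ht _), Finset.disjoint_left]
  grind

end CliqueSupport

/-- The edges of `dynkinGraph`, each oriented so that it is listed only once. -/
def dynkinEdges : List (Fin 9 × Fin 9) :=
  [(0, 1), (1, 2), (2, 3), (3, 4), (4, 5), (5, 7), (2, 6), (6, 8)]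

/-- The part of the extended Dynkin diagram carrying the curves `E₁, …, E₈` (vertices `0, …, 7`) and
`A₂` (vertex `8`). The coordinates `η₁, …, η₈, α₂` of two non-adjacent vertices are coprime. -/
def dynkinGraph : SimpleGraph (Fin 9) where
  Adj i j := (i, j) ∈ dynkinEdges ∨ (j, i) ∈ dynkinEdges
  symm := ⟨fun _ _ => Or.symm⟩
  loopless := ⟨by decide⟩

instance : DecidableRel dynkinGraph.Adj := fun i j =>
  inferInstanceAs (Decidable ((i, j) ∈ dynkinEdges ∨ (j, i) ∈ dynkinEdges))

lemma cliqueFree_dynkinGraph : dynkinGraph.CliqueFree 3 := by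
  intro s hs
  obtain ⟨u, v, w, huv, huw, hvw, -⟩ := SimpleGraph.is3Clique_iff.mp hs
  revert u v w
  decide

/-- The exponent vector with value `m` at the first and `n` at the second endpoint of `ε`. -/
def edgeVector (ε : Fin 9 × Fin 9) (m n : ℕ) : Fin 9 → ℕ := Pi.single ε.1 m + Pi.single ε.2 n

lemma mem_cliqueSupported_dynkinGraph_iff {e : Fin 9 → ℕ} :
    e ∈ cliqueSupported dynkinGraph ↔ ∃ ε ∈ dynkinEdges, ∃ m n, e = edgeVector ε m n := by
  refine (mem_cliqueSupported_iff cliqueFree_dynkinGraph (by decide)).trans ⟨?_, ?_⟩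
  · rintro ⟨i, j, hij | hij, m, n, rfl⟩
    · exact ⟨(i, j), hij, m, n, rfl⟩
    · exact ⟨(j, i), hij, n, m, add_comm _ _⟩
  · rintro ⟨ε, hε, m, n, rfl⟩
    exact ⟨ε.1, ε.2, .inl hε, m, n, rfl⟩

/-- The exponents of `g`, `y`, `x₀` (rows) as monomials in `η₁, …, η₈, α₂` (columns). The columns
are the primitive generators of the rays of the fan subdividing `tropicalSurface`. -/
def coxMatrix : Matrix (Fin 3) (Fin 9) ℕ :=
  !![2, 3, 4, 3, 2, 1, 2, 0, 0;
     0, 1, 2, 2, 2, 2, 1, 2, 0;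
     3, 6, 9, 7, 5, 3, 5, 1, 1]

/-- The tropicalization of `x₀² + g³ y (g α₁³ + y² α₃) = 0` in the valuations `v` of `(g, y, x₀)`,
when `α₁` is a unit wherever `y` is not and `α₃` is a unit wherever `g` is not. -/
def tropicalSurface : Set (Fin 3 → ℕ) :=
  {v | 3 * v 0 + v 1 + min (v 0) (2 * v 1) ≤ 2 * v 2 ∧
    (v 0 ≠ 2 * v 1 → 2 * v 2 = 3 * v 0 + v 1 + min (v 0) (2 * v 1))}

/-- The coordinates of a point of `tropicalSurface` with respect to the columns of `coxMatrix`. Each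
entry vanishes outside the cones containing its ray, by truncated subtraction or by the case
distinction on `v 0 = 2 * v 1`. -/
def fanCoords (v : Fin 3 → ℕ) : Fin 9 → ℕ :=
  ![(v 0 - 3 * v 1) / 2, min (v 1) (v 0 - 2 * v 1),
    if v 0 = 2 * v 1 then 5 * v 1 - v 2 else min (3 * v 1 - v 0) (2 * v 0 - 3 * v 1) / 2,
    min (2 * v 1 - v 0) (v 0 - v 1), min (3 * v 1 - 2 * v 0) (2 * v 0 - v 1) / 2,
    min (v 1 - v 0) (v 0),
    if v 0 = 2 * v 1 then min (2 * v 2 - 9 * v 1) (v 1) else 0,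
    (v 1 - 2 * v 0) / 2,
    if v 0 = 2 * v 1 then v 2 - 5 * v 1 else 0]

lemma coxMatrix_mulVec_edgeVector (ε : Fin 9 × Fin 9) (m n : ℕ) :
    coxMatrix *ᵥ edgeVector ε m n = fun k => coxMatrix k ε.1 * m + coxMatrix k ε.2 * n := by
  ext k
  simp [edgeVector, mulVec_add, mul_comm]

lemma coxMatrix_mulVec_edgeVector_mem {ε : Fin 9 × Fin 9} (hε : ε ∈ dynkinEdges) (m n : ℕ) :
    coxMatrix *ᵥ edgeVector ε m n ∈ tropicalSurface := by
  rw [coxMatrix_mulVec_edgeVector, tropicalSurface]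
  simp only [dynkinEdges, List.mem_cons, List.not_mem_nil, or_false] at hε
  rcases hε with rfl | rfl | rfl | rfl | rfl | rfl | rfl | rfl <;>
    simp only [coxMatrix, of_apply, cons_val', cons_val_fin_one, cons_val,
      Set.mem_ofPred_eq] <;>
    omega

lemma fanCoords_coxMatrix_mulVec_edgeVector {ε : Fin 9 × Fin 9} (hε : ε ∈ dynkinEdges)
    (m n : ℕ) : fanCoords (coxMatrix *ᵥ edgeVector ε m n) = edgeVector ε m n := by
  rw [coxMatrix_mulVec_edgeVector, funext_iff]
  simp only [dynkinEdges, List.mem_cons, List.not_mem_nil, or_false] at hε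
  rcases hε with rfl | rfl | rfl | rfl | rfl | rfl | rfl | rfl <;>
    simp only [coxMatrix, fanCoords, edgeVector, of_apply, cons_val', cons_val_fin_one, cons_val,
      Fin.forall_fin_succ, Fin.reduceSucc, Fin.succ_zero_eq_one, Fin.succ_one_eq_two,
      Pi.add_apply, Pi.single_apply, Fin.reduceEq, if_true, if_false, IsEmpty.forall_iff,
      and_true] <;>
    grind (splits := 30)

lemma exists_edge_of_mem_tropicalSurface {v : Fin 3 → ℕ} (hv : v ∈ tropicalSurface) :
    ∃ ε ∈ dynkinEdges, ∃ m n, ∀ k, coxMatrix k ε.1 * m + coxMatrix k ε.2 * n = v k := by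
  obtain ⟨hle, heq⟩ := hv
  simp only [Fin.forall_fin_succ, Fin.succ_zero_eq_one, Fin.succ_one_eq_two, IsEmpty.forall_iff,
    and_true]
  rcases eq_or_ne (v 0) (2 * v 1) with h | h
  · rcases le_total (v 2) (5 * v 1) with h' | h'
    · refine ⟨(2, 6), by decide, 5 * v 1 - v 2, 2 * v 2 - 9 * v 1, ?_⟩
      simp only [coxMatrix, of_apply, cons_val', cons_val_fin_one, cons_val]
      omega
    · refine ⟨(6, 8), by decide, v 1, v 2 - 5 * v 1, ?_⟩
      simp only [coxMatrix, of_apply, cons_val', cons_val_fin_one, cons_val]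
      omega
  have hd := heq h
  rcases le_total (3 * v 1) (v 0) with h₁ | h₁
  · refine ⟨(0, 1), by decide, (v 0 - 3 * v 1) / 2, v 1, ?_⟩
    simp only [coxMatrix, of_apply, cons_val', cons_val_fin_one, cons_val]
    omega
  rcases le_total (2 * v 1) (v 0) with h₂ | h₂
  · refine ⟨(1, 2), by decide, v 0 - 2 * v 1, (3 * v 1 - v 0) / 2, ?_⟩
    simp only [coxMatrix, of_apply, cons_val', cons_val_fin_one, cons_val]
    omega
  rcases le_total (3 * v 1) (2 * v 0) with h₃ | h₃
  · refine ⟨(2, 3), by decide, (2 * v 0 - 3 * v 1) / 2, 2 * v 1 - v 0, ?_⟩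
    simp only [coxMatrix, of_apply, cons_val', cons_val_fin_one, cons_val]
    omega
  rcases le_total (v 1) (v 0) with h₄ | h₄
  · refine ⟨(3, 4), by decide, v 0 - v 1, (3 * v 1 - 2 * v 0) / 2, ?_⟩
    simp only [coxMatrix, of_apply, cons_val', cons_val_fin_one, cons_val]
    omega
  rcases le_total (v 1) (2 * v 0) with h₅ | h₅
  · refine ⟨(4, 5), by decide, (2 * v 0 - v 1) / 2, v 1 - v 0, ?_⟩
    simp only [coxMatrix, of_apply, cons_val', cons_val_fin_one, cons_val]
    omega
  · refine ⟨(5, 7), by decide, v 0, (v 1 - 2 * v 0) / 2, ?_⟩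
    simp only [coxMatrix, of_apply, cons_val', cons_val_fin_one, cons_val]
    omega

theorem bijOn_coxMatrix_mulVec :
    BijOn (coxMatrix *ᵥ ·) (cliqueSupported dynkinGraph) tropicalSurface := by
  refine ⟨fun e he => ?_, LeftInvOn.injOn (f₁' := fanCoords) fun e he => ?_, fun v hv => ?_⟩
  · obtain ⟨ε, hε, m, n, rfl⟩ := mem_cliqueSupported_dynkinGraph_iff.mp he
    exact coxMatrix_mulVec_edgeVector_mem hε m n
  · obtain ⟨ε, hε, m, n, rfl⟩ := mem_cliqueSupported_dynkinGraph_iff.mp he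
    exact fanCoords_coxMatrix_mulVec_edgeVector hε m n
  · obtain ⟨ε, hε, m, n, h⟩ := exists_edge_of_mem_tropicalSurface hv
    exact ⟨_, mem_cliqueSupported_dynkinGraph_iff.mpr ⟨ε, hε, m, n, rfl⟩,
      (coxMatrix_mulVec_edgeVector ε m n).trans (funext h)⟩

section Valuation

variable {R : Type*} [CommRing R] {p u v r s : R}

lemma min_emultiplicity_le_emultiplicity_mul_add_mul :
    min (emultiplicity p u) (emultiplicity p v) ≤ emultiplicity p (u * r + v * s) :=
  (min_le_min (emultiplicity_le_emultiplicity_of_dvd_right (dvd_mul_right u r))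
    (emultiplicity_le_emultiplicity_of_dvd_right (dvd_mul_right v s))).trans
    min_le_emultiplicity_add

variable [IsDomain R]

lemma emultiplicity_mul_add_mul_of_lt (hp : Prime p) (hr : p ∣ v → ¬p ∣ r)
    (h : emultiplicity p u < emultiplicity p v) :
    emultiplicity p (u * r + v * s) = emultiplicity p u := by
  have hur : emultiplicity p (u * r) = emultiplicity p u := by
    rw [emultiplicity_mul hp, emultiplicity_eq_zero.mpr (hr (emultiplicity_ne_zero.mp h.ne_bot)),
      add_zero]
  rw [add_comm, emultiplicity_add_of_gt, hur]
  exact hur.trans_lt (h.trans_le (emultiplicity_le_emultiplicity_of_dvd_right (dvd_mul_right v s)))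

lemma emultiplicity_mul_add_mul_of_ne (hp : Prime p) (hr : p ∣ v → ¬p ∣ r) (hs : p ∣ u → ¬p ∣ s)
    (h : emultiplicity p u ≠ emultiplicity p v) :
    emultiplicity p (u * r + v * s) = min (emultiplicity p u) (emultiplicity p v) := by
  rcases h.lt_or_gt with h | h
  · rw [emultiplicity_mul_add_mul_of_lt hp hr h, min_eq_left h.le]
  · rw [add_comm, emultiplicity_mul_add_mul_of_lt hp hs h, min_eq_right h.le]

end Valuation

lemma emultiplicity_natCast_eq_factorization {p n : ℕ} (hp : p.Prime) (hn : n ≠ 0) :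
    emultiplicity (p : ℤ) n = n.factorization p := by
  have := Fact.mk hp
  rw [Int.natCast_emultiplicity, Nat.factorization_def n hp, padicValNat_eq_emultiplicity hn]

/-- The equation and coprimality conditions for `r = (g, y, x₀)`, `α₁`, `α₃` that remain after the
greatest common divisor `g` has been split off from `x₁ = g y` and `x₂ = -g α₁`. -/
structure IsReducedPoint (r : Fin 3 → ℕ) (α₁ α₃ : ℤ) : Prop where
  ne_zero : ∀ k, r k ≠ 0
  equation : (r 2 : ℤ) ^ 2 + r 0 ^ 3 * r 1 * (r 0 * α₁ ^ 3 + r 1 ^ 2 * α₃) = 0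
  isCoprime_one : IsCoprime (r 1 : ℤ) α₁
  isCoprime_zero : IsCoprime (r 0 : ℤ) α₃

lemma IsReducedPoint.factorization_mem_tropicalSurface {r : Fin 3 → ℕ} {α₁ α₃ : ℤ}
    (h : IsReducedPoint r α₁ α₃) {p : ℕ} (hp : p.Prime) :
    (fun k => (r k).factorization p) ∈ tropicalSurface := by
  obtain ⟨hr, hr_eq, h₁, h₃⟩ := h
  have hpZ : Prime (p : ℤ) := Nat.prime_iff_prime_int.mp hp
  have hval (k) : emultiplicity (p : ℤ) (r k) = (r k).factorization p :=
    emultiplicity_natCast_eq_factorization hp (hr k)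
  set v : Fin 3 → ℕ := fun k => (r k).factorization p
  have hsq : emultiplicity (p : ℤ) (r 1 ^ 2) = (2 * v 1 : ℕ) := by
    rw [emultiplicity_pow hpZ, hval]
    norm_cast
  set w : ℤ := r 0 * α₁ ^ 3 + r 1 ^ 2 * α₃
  have hw : ((2 * v 2 : ℕ) : ℕ∞) = (3 * v 0 + v 1 : ℕ) + emultiplicity (p : ℤ) w := by
    have := congrArg (emultiplicity (p : ℤ)) (eq_neg_of_add_eq_zero_left hr_eq)
    rw [emultiplicity_neg, emultiplicity_mul hpZ, emultiplicity_mul hpZ, emultiplicity_pow hpZ,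
      emultiplicity_pow hpZ, hval, hval, hval] at this
    exact_mod_cast this
  obtain ⟨m, hm⟩ : ∃ m : ℕ, m = emultiplicity (p : ℤ) w := by
    refine ENat.ne_top_iff_exists.mp fun htop => ENat.natCast_ne_top (2 * v 2) ?_
    rw [hw, htop, add_top]
  have hmin : min (v 0) (2 * v 1) ≤ m := by
    rw [← Nat.cast_le (α := ℕ∞), Nat.mono_cast.map_min, ← hval, ← hsq, hm]
    exact min_emultiplicity_le_emultiplicity_mul_add_mul
  have hmin_eq (hne : v 0 ≠ 2 * v 1) : m = min (v 0) (2 * v 1) := by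
    have hα₁ (hpy : (p : ℤ) ∣ r 1 ^ 2) (hpα : (p : ℤ) ∣ α₁ ^ 3) : False :=
      hpZ.not_isUnit (h₁.isUnit_of_dvd' (hpZ.dvd_of_dvd_pow hpy) (hpZ.dvd_of_dvd_pow hpα))
    have hα₃ (hpg : (p : ℤ) ∣ r 0) (hpα : (p : ℤ) ∣ α₃) : False :=
      hpZ.not_isUnit (h₃.isUnit_of_dvd' hpg hpα)
    rw [← Nat.cast_inj (R := ℕ∞), Nat.mono_cast.map_min, ← hval, ← hsq, hm]
    refine emultiplicity_mul_add_mul_of_ne hpZ hα₁ hα₃ ?_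
    rwa [hval, hsq, ne_eq, Nat.cast_inj]
  rw [← hm] at hw
  norm_cast at hw
  refine ⟨?_, fun hne => ?_⟩
  · linarith
  · rw [← hmin_eq hne, hw]

/-- The integral points counted by `Naff`, without the height conditions. -/
def affinePoints : Set (ℤ × ℤ × ℤ × ℤ) :=
  {x | x.1 ^ 2 = x.2.1 * x.2.2.1 ^ 3 + x.2.1 ^ 3 * x.2.2.2 ∧
    1 ≤ x.1 ∧ 1 ≤ x.2.1 ∧ Int.gcd x.2.1 (Int.gcd x.2.2.1 x.2.2.2) = 1}

/-- The triples `((g, y, x₀), α₁, α₃)` satisfying `IsReducedPoint`. -/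
def reducedPoints : Set ((Fin 3 → ℕ) × ℤ × ℤ) := {q | IsReducedPoint q.1 q.2.1 q.2.2}

/-- The point `(x₀, x₁, x₂, x₃)` of the surface attached to `((g, y, x₀), α₁, α₃)`. -/
def surfaceCoords (q : (Fin 3 → ℕ) × ℤ × ℤ) : ℤ × ℤ × ℤ × ℤ :=
  (q.1 2, q.1 0 * q.1 1, -(q.1 0 * q.2.1), -q.2.2)

lemma IsReducedPoint.gcd_eq {r : Fin 3 → ℕ} {α₁ α₃ : ℤ} (h : IsReducedPoint r α₁ α₃) :
    Int.gcd (r 0 * r 1) (-(r 0 * α₁)) = r 0 := by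
  rw [Int.gcd_neg, Int.gcd_mul_left, Int.isCoprime_iff_gcd_eq_one.mp h.isCoprime_one, mul_one,
    Int.natAbs_natCast]

lemma mapsTo_surfaceCoords : MapsTo surfaceCoords reducedPoints affinePoints := by
  rintro ⟨r, α₁, α₃⟩ (h : IsReducedPoint r α₁ α₃)
  refine ⟨?_, ?_, ?_, ?_⟩ <;> dsimp only [surfaceCoords]
  · linear_combination h.equation
  · exact_mod_cast Nat.one_le_iff_ne_zero.mpr (h.ne_zero 2)
  · exact_mod_cast Nat.one_le_iff_ne_zero.mpr (mul_ne_zero (h.ne_zero 0) (h.ne_zero 1))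
  · rw [← Int.gcd_assoc, h.gcd_eq, Int.gcd_neg]
    exact Int.isCoprime_iff_gcd_eq_one.mp h.isCoprime_zero

lemma injOn_surfaceCoords : InjOn surfaceCoords reducedPoints := by
  rintro ⟨r, α₁, α₃⟩ (h : IsReducedPoint r α₁ α₃) ⟨r', α₁', α₃'⟩
    (h' : IsReducedPoint r' α₁' α₃') heq
  simp only [surfaceCoords, Prod.mk.injEq, neg_inj, Nat.cast_inj] at heq
  obtain ⟨h_two, h_one, h_α₁, rfl⟩ := heq
  have h_zero : r 0 = r' 0 := by rw [← h.gcd_eq, ← h'.gcd_eq, h_one, h_α₁]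
  have h0 : (r' 0 : ℤ) ≠ 0 := Nat.cast_ne_zero.mpr (h'.ne_zero 0)
  rw [h_zero] at h_one h_α₁
  obtain rfl := mul_left_cancel₀ h0 h_α₁
  have hr : r = r' := by
    ext k
    fin_cases k
    exacts [h_zero, Nat.cast_injective (mul_left_cancel₀ h0 h_one), h_two]
  rw [hr]

lemma surjOn_surfaceCoords : SurjOn surfaceCoords reducedPoints affinePoints := by
  rintro ⟨x₀, x₁, x₂, x₃⟩ ⟨heq, hx₀, hx₁, hgcd⟩
  dsimp only at heq hx₀ hx₁ hgcd
  have hg : 0 < Int.gcd x₁ x₂ := Int.gcd_pos_of_ne_zero_left _ (by lia)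
  obtain ⟨y, a, hya, hy, ha⟩ := Int.exists_gcd_one hg
  rw [← Int.gcd_assoc] at hgcd
  set g := Int.gcd x₁ x₂
  have hy_pos : 0 < y := pos_of_mul_pos_left (hy ▸ hx₁) (Int.natCast_nonneg g)
  lift x₀ to ℕ using by lia
  lift y to ℕ using hy_pos.le
  refine ⟨(![g, y, x₀], -a, -x₃), ⟨?_, ?_, ?_, ?_⟩, ?_⟩
  · intro k
    fin_cases k
    exacts [hg.ne', (Nat.cast_pos.mp hy_pos).ne', fun h : x₀ = 0 => by simp [h] at hx₀]
  · change (x₀ : ℤ) ^ 2 + g ^ 3 * y * (g * (-a) ^ 3 + y ^ 2 * -x₃) = 0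
    rw [hy, ha] at heq
    linear_combination heq
  · simpa [Int.isCoprime_iff_gcd_eq_one] using hya
  · simpa [Int.isCoprime_iff_gcd_eq_one] using hgcd
  · simp [surfaceCoords, hy, ha, mul_comm]

theorem bijOn_surfaceCoords : BijOn surfaceCoords reducedPoints affinePoints :=
  ⟨mapsTo_surfaceCoords, injOn_surfaceCoords, surjOn_surfaceCoords⟩

lemma monomialMap_coxMatrix (t : Fin 9 → ℕ) :
    monomialMap coxMatrix t =
      ![t 0 ^ 2 * t 1 ^ 3 * t 2 ^ 4 * t 3 ^ 3 * t 4 ^ 2 * t 5 * t 6 ^ 2,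
        t 1 * t 2 ^ 2 * t 3 ^ 2 * t 4 ^ 2 * t 5 ^ 2 * t 6 * t 7 ^ 2,
        t 0 ^ 3 * t 1 ^ 6 * t 2 ^ 9 * t 3 ^ 7 * t 4 ^ 5 * t 5 ^ 3 * t 6 ^ 5 * t 7 * t 8] := by
  ext k
  fin_cases k <;> simp [monomialMap, coxMatrix, Fin.prod_univ_succ, mul_assoc]

lemma mem_locallyIn_cliqueSupported_dynkinGraph_iff {t : Fin 9 → ℕ} :
    t ∈ locallyIn (cliqueSupported dynkinGraph) ↔ (∀ v, t v ≠ 0) ∧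
      Int.gcd (t 8) (t 0 * t 1 * t 2 * t 3 * t 4 * t 5 * t 7) = 1 ∧
      Int.gcd (t 7) (t 0 * t 1 * t 2 * t 3 * t 4 * t 6) = 1 ∧
      Int.gcd (t 6) (t 0 * t 1 * t 3 * t 4 * t 5) = 1 ∧
      Int.gcd (t 5) (t 0 * t 1 * t 2 * t 3) = 1 ∧
      Int.gcd (t 4) (t 0 * t 1 * t 2) = 1 ∧
      Int.gcd (t 3) (t 0 * t 1) = 1 ∧
      Int.gcd (t 2) (t 0) = 1 := by
  have : Std.Symm fun v w => ¬dynkinGraph.Adj v w → (t v).Coprime (t w) :=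
    ⟨fun v w h hwv => (h (mt .symm hwv)).symm⟩
  have hadj (v w : Fin 9) :
      dynkinGraph.Adj v w ↔ (v, w) ∈ dynkinEdges ∨ (w, v) ∈ dynkinEdges := Iff.rfl
  rw [mem_locallyIn_cliqueSupported_iff, pairwise_iff_gt]
  refine and_congr_right fun _ => ?_
  simp only [← Int.isCoprime_iff_gcd_eq_one, IsCoprime.mul_right_iff, Nat.isCoprime_iff_coprime,
    hadj]
  simp only [dynkinEdges, List.mem_cons, List.not_mem_nil, or_false, Prod.mk.injEq,
    Fin.forall_fin_succ, Fin.succ_zero_eq_one, Fin.succ_one_eq_two, Fin.reduceSucc, Fin.reduceEq,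
    Fin.reduceLT, zero_ne_one, Fin.succ_ne_zero, Fin.succ_pos, Fin.lt_one_iff, lt_self_iff_false,
    not_lt_zero, not_true_eq_false, not_false_eq_true, and_true, true_and, and_self, forall_const,
    implies_true, IsEmpty.forall_iff, not_or, not_and, and_imp, imp_false]
  tauto

lemma torsorEquation_iff {t : Fin 9 → ℕ} (ht : ∀ v, t v ≠ 0) (α₁ α₃ : ℤ) :
    (monomialMap coxMatrix t 2 : ℤ) ^ 2 +
        monomialMap coxMatrix t 0 ^ 3 * monomialMap coxMatrix t 1 *
          (monomialMap coxMatrix t 0 * α₁ ^ 3 + monomialMap coxMatrix t 1 ^ 2 * α₃) = 0 ↔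
      (t 0 : ℤ) ^ 2 * t 1 * α₁ ^ 3 + t 6 * t 8 ^ 2 +
        t 3 * t 4 ^ 2 * t 5 ^ 3 * t 7 ^ 4 * α₃ = 0 := by
  have hm : (t 0 ^ 6 * t 1 ^ 12 * t 2 ^ 18 * t 3 ^ 14 * t 4 ^ 10 * t 5 ^ 6 * t 6 ^ 9 *
      t 7 ^ 2 : ℤ) ≠ 0 := by
    simp [ht]
  refine (Eq.congr_left ?_).trans (mul_eq_zero_iff_left hm)
  simp only [monomialMap_coxMatrix, cons_val, Nat.cast_mul, Nat.cast_pow]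
  ring

/-- The map `((η₁, …, η₈, α₂), α₁, α₃) ↦ ((g, y, x₀), α₁, α₃)` given by the Cox coordinates. -/
def torsorParam (q : (Fin 9 → ℕ) × ℤ × ℤ) : (Fin 3 → ℕ) × ℤ × ℤ :=
  (monomialMap coxMatrix q.1, q.2)

/-- The integral points of the universal torsor, as triples `((η₁, …, η₈, α₂), α₁, α₃)`; they are
described through their image under `torsorParam`, see `mem_torsorPoints_iff`. -/
def torsorPoints : Set ((Fin 9 → ℕ) × ℤ × ℤ) :=
  Prod.fst ⁻¹' locallyIn (cliqueSupported dynkinGraph) ∩ torsorParam ⁻¹' reducedPoints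

lemma mem_torsorPoints_iff {t : Fin 9 → ℕ} {α₁ α₃ : ℤ} :
    (t, α₁, α₃) ∈ torsorPoints ↔ t ∈ locallyIn (cliqueSupported dynkinGraph) ∧
      (t 0 : ℤ) ^ 2 * t 1 * α₁ ^ 3 + t 6 * t 8 ^ 2 + t 3 * t 4 ^ 2 * t 5 ^ 3 * t 7 ^ 4 * α₃ = 0 ∧
      Int.gcd α₁ (t 1 * t 2 * t 3 * t 4 * t 5 * t 6 * t 7) = 1 ∧
      Int.gcd α₃ (t 0 * t 1 * t 2 * t 3 * t 4 * t 5 * t 6) = 1 := by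
  refine and_congr_right fun ⟨ht, _⟩ => ?_
  have hα₁ : IsCoprime (monomialMap coxMatrix t 1 : ℤ) α₁ ↔
      Int.gcd α₁ (t 1 * t 2 * t 3 * t 4 * t 5 * t 6 * t 7) = 1 := by
    rw [isCoprime_monomialMap_iff, ← Int.isCoprime_iff_gcd_eq_one]
    simp [Fin.forall_fin_succ, coxMatrix, IsCoprime.mul_right_iff, isCoprime_comm, and_assoc]
  have hα₃ : IsCoprime (monomialMap coxMatrix t 0 : ℤ) α₃ ↔
      Int.gcd α₃ (t 0 * t 1 * t 2 * t 3 * t 4 * t 5 * t 6) = 1 := by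
    rw [isCoprime_monomialMap_iff, ← Int.isCoprime_iff_gcd_eq_one]
    simp [Fin.forall_fin_succ, coxMatrix, IsCoprime.mul_right_iff, isCoprime_comm, and_assoc]
  rw [← torsorEquation_iff ht, ← hα₁, ← hα₃]
  exact ⟨fun ⟨_, h, h₁, h₃⟩ => ⟨h, h₁, h₃⟩,
    fun ⟨h, h₁, h₃⟩ => ⟨monomialMap_ne_zero _ ht, h, h₁, h₃⟩⟩

/-- The box cut out by the height conditions on the surface. -/
def heightBox (B : ℝ) : Set (ℤ × ℤ × ℤ × ℤ) :=
  {x | x.2.1 ≤ B ∧ |(x.2.2.1 : ℝ)| ≤ B ∧ |(x.2.2.2 : ℝ)| ≤ B ∧ x.1 ≤ B ^ 2}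

lemma IsReducedPoint.mem_locallyIn_tropicalSurface {r : Fin 3 → ℕ} {α₁ α₃ : ℤ}
    (h : IsReducedPoint r α₁ α₃) : r ∈ locallyIn tropicalSurface := by
  refine ⟨h.ne_zero, fun p => ?_⟩
  by_cases hp : p.Prime
  · exact h.factorization_mem_tropicalSurface hp
  · simp [Nat.factorization_eq_zero_of_not_prime _ hp, tropicalSurface]

theorem bijOn_torsorParam : BijOn torsorParam torsorPoints reducedPoints := by
  have h₀ : (0 : Fin 9 → ℕ) ∈ cliqueSupported dynkinGraph := by simp [cliqueSupported]
  have h : BijOn torsorParam (locallyIn (cliqueSupported dynkinGraph) ×ˢ univ)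
      (locallyIn tropicalSurface ×ˢ univ) :=
    (bijOn_monomialMap h₀ bijOn_coxMatrix_mulVec).prodMap (bijOn_id univ)
  have hsub : reducedPoints ⊆ locallyIn tropicalSurface ×ˢ univ := fun q hq =>
    ⟨hq.mem_locallyIn_tropicalSurface, mem_univ _⟩
  simpa only [prod_univ, torsorPoints] using h.subset_right hsub

lemma Naff_eq_ncard (B : ℝ) : Naff B = (affinePoints ∩ heightBox B).ncard := by
  rw [Naff, ← Nat.card_coe_set_eq]
  simp only [affinePoints, heightBox, ← Set.ofPred_and, and_assoc]
  rfl

/-- The reordering of `((η₁, …, η₈, α₂), α₁, α₃)` into the coordinates used by `Ntors`. -/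
def torsorCoords (q : (Fin 9 → ℕ) × ℤ × ℤ) : (Fin 8 → ℤ) × ℤ × ℤ × ℤ :=
  (fun i => q.1 i.castSucc, q.2.1, q.1 8, q.2.2)

lemma injective_torsorCoords : Function.Injective torsorCoords := by
  rintro ⟨t, α₁, α₃⟩ ⟨t', α₁', α₃'⟩ h
  simp only [torsorCoords, Prod.mk.injEq, funext_iff, Nat.cast_inj] at h
  obtain ⟨hη, rfl, hα₂, rfl⟩ := h
  rw [funext (Fin.lastCases hα₂ hη : ∀ i, t i = t' i)]

lemma mem_range_torsorCoords {η : Fin 8 → ℤ} {α₁ α₂ α₃ : ℤ} (hη : ∀ i, 0 ≤ η i) (hα₂ : 0 ≤ α₂) :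
    (η, α₁, α₂, α₃) ∈ range torsorCoords := by
  lift η to Fin 8 → ℕ using hη
  lift α₂ to ℕ using hα₂
  refine ⟨(Fin.snoc η α₂, α₁, α₃), ?_⟩
  simp only [torsorCoords, Fin.snoc_castSucc]
  rfl

lemma mem_preimage_heightBox_iff {t : Fin 9 → ℕ} {α₁ α₃ : ℤ} {B : ℝ} :
    (t, α₁, α₃) ∈ surfaceCoords ∘ torsorParam ⁻¹' heightBox B ↔
      ((t 0 ^ 2 * t 1 ^ 4 * t 2 ^ 6 * t 3 ^ 5 * t 4 ^ 4 * t 5 ^ 3 * t 6 ^ 3 * t 7 ^ 2 : ℤ) :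
        ℝ) ≤ B ∧
      |((t 0 ^ 2 * t 1 ^ 3 * t 2 ^ 4 * t 3 ^ 3 * t 4 ^ 2 * t 5 * t 6 ^ 2 * α₁ : ℤ) : ℝ)| ≤ B ∧
      |(α₃ : ℝ)| ≤ B ∧
      ((t 0 ^ 3 * t 1 ^ 6 * t 2 ^ 9 * t 3 ^ 7 * t 4 ^ 5 * t 5 ^ 3 * t 6 ^ 5 * t 7 * t 8 : ℤ) : ℝ) ≤
        B ^ 2 := by
  have hx₁ : (t 0 ^ 2 * t 1 ^ 4 * t 2 ^ 6 * t 3 ^ 5 * t 4 ^ 4 * t 5 ^ 3 * t 6 ^ 3 * t 7 ^ 2 : ℤ) =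
      (t 0 ^ 2 * t 1 ^ 3 * t 2 ^ 4 * t 3 ^ 3 * t 4 ^ 2 * t 5 * t 6 ^ 2) *
        (t 1 * t 2 ^ 2 * t 3 ^ 2 * t 4 ^ 2 * t 5 ^ 2 * t 6 * t 7 ^ 2) := by
    ring
  rw [hx₁]
  simp [surfaceCoords, torsorParam, monomialMap_coxMatrix, heightBox]

lemma Ntors_eq_ncard (B : ℝ) :
    Ntors B = (torsorPoints ∩ (surfaceCoords ∘ torsorParam) ⁻¹' heightBox B).ncard := by
  refine (Nat.card_coe_set_eq (Set.ofPred _)).trans ?_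
  rw [← Set.ncard_preimage_of_injective_subset_range injective_torsorCoords]
  · congr 1
    ext ⟨t, α₁, α₃⟩
    have hpos : (∀ v, t v ≠ 0) ↔ (∀ i : Fin 8, 1 ≤ (t i.castSucc : ℤ)) ∧ 1 ≤ (t 8 : ℤ) := by
      simp only [Nat.one_le_cast, Nat.one_le_iff_ne_zero]
      exact Fin.forall_fin_succ'
    rw [mem_inter_iff, mem_torsorPoints_iff, mem_locallyIn_cliqueSupported_dynkinGraph_iff,
      mem_preimage_heightBox_iff, hpos]
    simp only [torsorCoords, mem_preimage, Set.mem_ofPred_eq, Fin.reduceCastSucc, Fin.isValue]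
    tauto
  · rintro ⟨η, α₁, α₂, α₃⟩ ⟨-, hη, hα₂, -⟩
    exact mem_range_torsorCoords (fun i => zero_le_one.trans (hη i)) (zero_le_one.trans hα₂)

theorem stmt19_general (B : ℝ) : Naff B = Ntors B := by
  have h := (bijOn_surfaceCoords.comp bijOn_torsorParam).inter_mapsTo
    (mapsTo_preimage _ (heightBox B)) inter_subset_right
  rw [Naff_eq_ncard, Ntors_eq_ncard, h.ncard_eq]

theorem stmt19 :
    ∃ C B₀ : ℝ, ∀ B : ℝ, B₀ ≤ B →
      |(Naff B : ℝ) - (Ntors B : ℝ)| ≤ C * B ^ ((2 : ℝ)/3) :=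
  ⟨0, 0, fun B _ => by simp [stmt19_general]⟩
end
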